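/- Decay of free waves inside and far outside the cone (Proposition 5.2): Let d ≥ 3 and let v be a finite-energy classical free wave, i.e. a twice continuously differentiable function v : ℝ^d × ℝ → ℝ with ∂ₜ²v = Δv everywhere and ∫_{ℝ^d}(|∇v(x,t)|² + |∂ₜv(x,t)|²)dx finite. Then: (i) lim_{η→+∞} sup_{t>η} ∫_{|x|<t−η} ( |∇v(x,t)|² + |∂ₜv(x,t)|² ) dx = 0; and (ii) lim_{R→+∞} sup_{t>0} ∫_{|x|>t+R} ( |∇v(x,t)|² + |∂ₜv(x,t)|² ) dx = 0. -/

import Mathlib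

/-!
The statement about the exterior of the cone is finite speed of propagation. Integrating the energy
against a cutoff to a backward light cone gives a quantity that decreases in time
(`energy_antitone`), so the energy in a ball is bounded by the energy in a slightly larger ball at
another time (`IsWave.energy_ball_le`). Together with conservation of energy, this bounds the energy
outside the ball of radius `t + R` by the tail outside radius `R - 2` of the convergent integral of
the initial energy (`IsWave.energy_compl_le`, `IsWave.exterior_decay`).

For the interior of the cone, consider first a wave with compactly supported data. The charge
associated with dilations, with density
`t (|∇U|² + |∂ₜU|²) / 2 + ∂ₜU (x · ∇U + (d - 1) / 2 * U)`, is conserved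
(`IsWave.dil_conservation`). After adding a divergence and completing a square, it dominates, when
`d ≥ 3`, the energy density with a weight comparable to `t - |x|` (`dil_lower`). The negative part
of the weight is bounded on the support of the wave, by finite speed of propagation. Hence the energy
in `|x| < t - η` is `O(1 / η)`, uniformly in time (`IsWave.decay_of_support`).

A general wave of finite energy differs by a wave of small energy from one with smooth compactly
supported data (`IsWave.approx`), and conservation of energy keeps the difference small at all times.
The existence of waves with such data comes from an explicit Fourier integral over the light cone
(`exists_wave`). The density of such data in the energy norm (`density_grad`, `density_fun`) is
truncation and mollification, except that `U (x, 0)` itself need not be square-integrable. This is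
repaired by subtracting the average of many far apart translates, which is small in the Dirichlet norm
and leaves a combination of increments, all of them square-integrable (`localize_grad`).
-/

noncomputable section

open MeasureTheory Metric Filter

/-- The Laplacian of `f : ℝ^d → ℝ`, written as the sum of second partial derivatives
in the coordinate directions. -/
def lap {d : ℕ} (f : EuclideanSpace ℝ (Fin d) → ℝ) (x : EuclideanSpace ℝ (Fin d)) : ℝ :=
  ∑ i : Fin d, fderiv ℝ (fun y => fderiv ℝ f y (EuclideanSpace.single i 1)) x
    (EuclideanSpace.single i 1)

/-- A finite-energy classical free wave on `ℝ^d`: a twice continuously differentiable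
function with `∂ₜ²v = Δv` everywhere and finite energy. -/
structure FreeWave (d : ℕ) where
  /-- the free wave, as a function of `(x, t)` -/
  v : EuclideanSpace ℝ (Fin d) → ℝ → ℝ
  smooth : ContDiff ℝ 2 (fun q : EuclideanSpace ℝ (Fin d) × ℝ => v q.1 q.2)
  pde : ∀ (x : EuclideanSpace ℝ (Fin d)) (t : ℝ),
    deriv (deriv (v x)) t = lap (fun y => v y t) x
  finite : ∀ t : ℝ, Integrable (fun x : EuclideanSpace ℝ (Fin d) =>
    ‖gradient (fun y => v y t) x‖ ^ 2 + (deriv (v x) t) ^ 2)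

namespace FreeWaveDecay

open scoped Topology FourierTransform ContDiff SchwartzMap

variable {d : ℕ}

/-! ### Waves and their energy density -/

/-- Space. -/
abbrev E (d : ℕ) := EuclideanSpace ℝ (Fin d)

/-- The derivative of a function on space-time along a fixed space-time direction. -/
def D (w : E d × ℝ) (f : E d × ℝ → ℝ) (q : E d × ℝ) : ℝ := fderiv ℝ f q w

/-- The `i`-th spatial coordinate direction in space-time. -/
def e (i : Fin d) : E d × ℝ := (EuclideanSpace.single i 1, 0)

/-- The time direction in space-time. -/
def τ : E d × ℝ := (0, 1)

/-- A `C²` solution of the free wave equation, as a function on space-time. -/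
structure IsWave (U : E d × ℝ → ℝ) : Prop where
  smooth : ContDiff ℝ 2 U
  pde : ∀ q, D τ (D τ U) q = ∑ i, D (e i) (D (e i) U) q

/-- The energy density `|∇U|² + |∂ₜU|²`, without the customary factor `1 / 2`. -/
def en (U : E d × ℝ → ℝ) (q : E d × ℝ) : ℝ := ∑ i, (D (e i) U q) ^ 2 + (D τ U q) ^ 2

/-- The support of `f` over each bounded time interval is bounded in space. In particular every
time slice of a continuous such function is integrable. -/
def CS (f : E d × ℝ → ℝ) : Prop := ∀ T : ℝ, ∃ ρ : ℝ, ∀ x t, |t| ≤ T → ρ ≤ ‖x‖ → f (x, t) = 0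

lemma contDiff_D {n m : WithTop ℕ∞} {f : E d × ℝ → ℝ} (hf : ContDiff ℝ n f) (hmn : m + 1 ≤ n)
    (w : E d × ℝ) : ContDiff ℝ m (D w f) :=
  (hf.fderiv_right hmn).clm_apply contDiff_const

lemma continuous_D {f : E d × ℝ → ℝ} (hf : ContDiff ℝ 1 f) (w : E d × ℝ) : Continuous (D w f) :=
  (contDiff_D (m := 0) hf (by simp) w).continuous

lemma D_comm {f : E d × ℝ → ℝ} (hf : ContDiff ℝ 2 f) (w z : E d × ℝ) (q : E d × ℝ) :
    D w (D z f) q = D z (D w f) q := by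
  have hd : DifferentiableAt ℝ (fderiv ℝ f) q :=
    ((hf.fderiv_right (m := 1) (by norm_num)).differentiable (by norm_num)) q
  have key : ∀ a b : E d × ℝ, D a (D b f) q = fderiv ℝ (fderiv ℝ f) q a b := by
    intro a b
    unfold D
    rw [fderiv_clm_apply hd (differentiableAt_const _)]
    simp
  rw [key, key]
  exact (hf.contDiffAt.isSymmSndFDerivAt (by simp)) w z

lemma hasDerivAt_slice_time {f : E d × ℝ → ℝ} (hf : Differentiable ℝ f) (x : E d) (t : ℝ) :
    HasDerivAt (fun s => f (x, s)) (D τ f (x, t)) t := by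
  have h1 : HasDerivAt (fun s : ℝ => ((x, s) : E d × ℝ)) (0, 1) t :=
    (hasDerivAt_const t x).prodMk (hasDerivAt_id t)
  exact (hf (x, t)).hasFDerivAt.comp_hasDerivAt t h1

lemma hasFDerivAt_slice {f : E d × ℝ → ℝ} (hf : Differentiable ℝ f) (x : E d) (t : ℝ) :
    HasFDerivAt (fun y => f (y, t))
      ((fderiv ℝ f (x, t)).comp (ContinuousLinearMap.inl ℝ (E d) ℝ)) x :=
  (hf (x, t)).hasFDerivAt.comp x (hasFDerivAt_prodMk_left x t)

lemma fderiv_slice {f : E d × ℝ → ℝ} (hf : Differentiable ℝ f) (x : E d) (t : ℝ) (i : Fin d) :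
    fderiv ℝ (fun y => f (y, t)) x (EuclideanSpace.single i 1) = D (e i) f (x, t) := by
  rw [(hasFDerivAt_slice hf x t).fderiv]
  simp [D, e]

/-! ### Calculus on space-time functions with spatially bounded support -/

lemma CS.mul_left {f g : E d × ℝ → ℝ} (hf : CS f) : CS (fun q => g q * f q) := by
  intro T
  obtain ⟨ρ, h⟩ := hf T
  exact ⟨ρ, fun x t ht hx => by simp [h x t ht hx]⟩

lemma CS.mul_right {f g : E d × ℝ → ℝ} (hf : CS f) : CS (fun q => f q * g q) := by
  intro T
  obtain ⟨ρ, h⟩ := hf T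
  exact ⟨ρ, fun x t ht hx => by simp [h x t ht hx]⟩

lemma CS.add {f g : E d × ℝ → ℝ} (hf : CS f) (hg : CS g) : CS (fun q => f q + g q) := by
  intro T
  obtain ⟨ρ, h⟩ := hf T
  obtain ⟨ρ', h'⟩ := hg T
  exact ⟨max ρ ρ', fun x t ht hx => by
    simp [h x t ht (le_trans (le_max_left _ _) hx), h' x t ht (le_trans (le_max_right _ _) hx)]⟩

lemma CS.sum {ι : Type*} (s : Finset ι) {f : ι → E d × ℝ → ℝ} (hf : ∀ i, CS (f i)) :
    CS (fun q => ∑ i ∈ s, f i q) := by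
  classical
  induction s using Finset.induction_on with
  | empty => intro T; exact ⟨0, fun x t _ _ => by simp⟩
  | insert a s ha ih => simpa [Finset.sum_insert ha] using (hf a).add ih

lemma CS.D {f : E d × ℝ → ℝ} (hf : CS f) (w : E d × ℝ) : CS (D w f) := by
  intro T
  obtain ⟨ρ, h⟩ := hf (T + 1)
  refine ⟨ρ + 1, fun x t ht hx => ?_⟩
  have : f =ᶠ[𝓝 (x, t)] fun _ => 0 := by
    have h1 : ∀ᶠ q : E d × ℝ in 𝓝 (x, t), |q.2| < T + 1 :=
      (continuous_snd.abs.tendsto (x, t)).eventually (gt_mem_nhds (by simpa using by linarith))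
    have h2 : ∀ᶠ q : E d × ℝ in 𝓝 (x, t), ρ < ‖q.1‖ :=
      (continuous_fst.norm.tendsto (x, t)).eventually (lt_mem_nhds (by simpa using by linarith))
    filter_upwards [h1, h2] with q hq1 hq2
    exact h q.1 q.2 hq1.le hq2.le
  simp [FreeWaveDecay.D, this.fderiv_eq]

lemma CS.hasCompactSupport {f : E d × ℝ → ℝ} (hf : CS f) (t : ℝ) :
    HasCompactSupport (fun x => f (x, t)) := by
  obtain ⟨ρ, h⟩ := hf |t|
  refine HasCompactSupport.intro (isCompact_closedBall (0 : E d) ρ) fun x hx => ?_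
  simp only [mem_closedBall, dist_zero_right, not_le] at hx
  exact h x t le_rfl hx.le

lemma CS.integrable {f : E d × ℝ → ℝ} (hf : CS f) (hc : Continuous f) (t : ℝ) :
    Integrable (fun x => f (x, t)) :=
  (hc.comp (by fun_prop : Continuous fun x : E d => (x, t))).integrable_of_hasCompactSupport
    (hf.hasCompactSupport t)

lemma integral_D_e {f : E d × ℝ → ℝ} (hf : CS f) (hc : ContDiff ℝ 1 f) (i : Fin d) (t : ℝ) :
    ∫ x, D (e i) f (x, t) = 0 := by
  have hdf := hc.differentiable one_ne_zero
  have := integral_mul_fderiv_eq_neg_fderiv_mul_of_integrable (μ := (volume : Measure (E d)))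
    (f := fun _ : E d => (1 : ℝ)) (g := fun x => f (x, t)) (v := EuclideanSpace.single i 1)
    (by simp) (by
      simp only [fderiv_slice hdf, one_mul]
      exact (hf.D _).integrable (continuous_D hc _) t) (by simpa using hf.integrable hc.continuous t)
    (fun x _ => differentiableAt_const _)
    (fun x _ => (hasFDerivAt_slice hdf x t).differentiableAt)
  simpa [fderiv_slice hdf] using this

lemma hasDerivAt_integral {f : E d × ℝ → ℝ} (hf : CS f) (hc : ContDiff ℝ 1 f) (t : ℝ) :
    HasDerivAt (fun s => ∫ x, f (x, s)) (∫ x, D τ f (x, t)) t := by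
  have hdf := hc.differentiable one_ne_zero
  obtain ⟨ρ, h⟩ := (hf.D τ) (|t| + 1)
  have hK : IsCompact ((closedBall (0 : E d) ρ) ×ˢ (closedBall t 1)) :=
    (isCompact_closedBall _ _).prod (isCompact_closedBall _ _)
  obtain ⟨C, hC⟩ := hK.exists_bound_of_continuousOn (continuous_D hc τ).continuousOn
  refine (hasDerivAt_integral_of_dominated_loc_of_deriv_le (s := ball t 1)
    (F := fun s x => f (x, s)) (F' := fun s x => D τ f (x, s))
    (bound := (closedBall (0 : E d) ρ).indicator fun _ => C)
    (ball_mem_nhds t one_pos) ?_ (hf.integrable hc.continuous t) ?_ ?_ ?_ ?_).2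
  · exact Eventually.of_forall fun s => (hf.integrable hc.continuous s).aestronglyMeasurable
  · exact ((hf.D τ).integrable (continuous_D hc τ) t).aestronglyMeasurable
  · refine Eventually.of_forall fun x s hs => ?_
    have hs' : |s| ≤ |t| + 1 := by
      have : |s - t| < 1 := by simpa [Real.dist_eq] using hs
      have := abs_sub_abs_le_abs_sub s t
      linarith
    by_cases hx : x ∈ closedBall (0 : E d) ρ
    · simp only [hx, Set.indicator_of_mem]
      exact hC (x, s) ⟨hx, ball_subset_closedBall hs⟩
    · simp only [hx, not_false_eq_true, Set.indicator_of_notMem]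
      rw [h x s hs' (by simpa using hx : ρ < ‖x‖).le]
      simp
  · exact (integrable_indicator_iff measurableSet_closedBall).2
      (integrableOn_const (measure_closedBall_lt_top).ne)
  · exact Eventually.of_forall fun x s _ => hasDerivAt_slice_time hdf x s

/-- Integrated conservation law, with a sign: if `∂ₜf ≤ div F` then `∫ f` decreases in time. -/
lemma antitone_integral {f : E d × ℝ → ℝ} {F : Fin d → E d × ℝ → ℝ} (hf : CS f)
    (hc : ContDiff ℝ 1 f) (hF : ∀ i, CS (F i)) (hFc : ∀ i, ContDiff ℝ 1 (F i))
    (hle : ∀ q, D τ f q ≤ ∑ i, D (e i) (F i) q) : Antitone fun t => ∫ x, f (x, t) := by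
  refine antitone_of_hasDerivAt_nonpos (fun t => hasDerivAt_integral hf hc t) fun t => ?_
  have hi : ∀ i, Integrable fun x => D (e i) (F i) (x, t) := fun i =>
    ((hF i).D _).integrable (continuous_D (hFc i) _) t
  calc ∫ x, D τ f (x, t) ≤ ∫ x, ∑ i, D (e i) (F i) (x, t) :=
        integral_mono ((hf.D τ).integrable (continuous_D hc τ) t)
          (integrable_finsetSum _ fun i _ => hi i) fun x => hle (x, t)
    _ = 0 := by
        rw [integral_finsetSum _ fun i _ => hi i]
        exact Finset.sum_eq_zero fun i _ => integral_D_e (hF i) (hFc i) i t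

/-! ### Finite speed of propagation and conservation of energy -/

lemma D_mul {f g : E d × ℝ → ℝ} (hf : Differentiable ℝ f) (hg : Differentiable ℝ g)
    (w q : E d × ℝ) : D w (fun q => f q * g q) q = D w f q * g q + f q * D w g q := by
  unfold D
  rw [fderiv_fun_mul (hf q) (hg q)]
  simp
  ring

lemma D_add {f g : E d × ℝ → ℝ} (hf : Differentiable ℝ f) (hg : Differentiable ℝ g)
    (w q : E d × ℝ) : D w (fun q => f q + g q) q = D w f q + D w g q := by
  unfold D
  rw [fderiv_fun_add (hf q) (hg q)]
  simp

lemma D_sub {f g : E d × ℝ → ℝ} (hf : Differentiable ℝ f) (hg : Differentiable ℝ g)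
    (w q : E d × ℝ) : D w (fun q => f q - g q) q = D w f q - D w g q := by
  unfold D
  rw [fderiv_fun_sub (hf q) (hg q)]
  simp

lemma D_const_mul {f : E d × ℝ → ℝ} (hf : Differentiable ℝ f) (c : ℝ)
    (w q : E d × ℝ) : D w (fun q => c * f q) q = c * D w f q := by
  unfold D
  rw [fderiv_const_mul (hf q) c]
  simp

lemma D_sq {f : E d × ℝ → ℝ} (hf : Differentiable ℝ f)
    (w q : E d × ℝ) : D w (fun q => f q ^ 2) q = 2 * (f q * D w f q) := by
  simp only [pow_two]
  rw [D_mul hf hf]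
  ring

lemma D_sum {ι : Type*} (s : Finset ι) {f : ι → E d × ℝ → ℝ} (hf : ∀ i, Differentiable ℝ (f i))
    (w q : E d × ℝ) : D w (fun q => ∑ i ∈ s, f i q) q = ∑ i ∈ s, D w (f i) q := by
  unfold D
  rw [fderiv_fun_sum fun i _ => hf i q]
  simp

lemma IsWave.differentiable_D {U : E d × ℝ → ℝ} (hU : IsWave U) (w : E d × ℝ) :
    Differentiable ℝ (D w U) :=
  (contDiff_D (m := 1) hU.smooth (by norm_num) w).differentiable one_ne_zero

lemma IsWave.contDiff_D {U : E d × ℝ → ℝ} (hU : IsWave U) (w : E d × ℝ) :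
    ContDiff ℝ 1 (D w U) :=
  FreeWaveDecay.contDiff_D (m := 1) hU.smooth (by norm_num) w

lemma IsWave.contDiff_en {U : E d × ℝ → ℝ} (hU : IsWave U) : ContDiff ℝ 1 (en U) := by
  unfold en
  exact (ContDiff.sum fun i _ => (hU.contDiff_D (e i)).pow 2).add ((hU.contDiff_D τ).pow 2)

lemma IsWave.D_en {U : E d × ℝ → ℝ} (hU : IsWave U) (w q : E d × ℝ) :
    D w (en U) q = 2 * (∑ i, D (e i) U q * D w (D (e i) U) q + D τ U q * D w (D τ U) q) := by
  have h : ∀ i : Fin d, Differentiable ℝ fun q => D (e i) U q ^ 2 := fun i =>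
    (hU.differentiable_D (e i)).pow 2
  change D w (fun q => ∑ i, (D (e i) U q) ^ 2 + (D τ U q) ^ 2) q = _
  rw [D_add (Differentiable.fun_sum fun i _ => h i) ((hU.differentiable_D τ).fun_pow 2), D_sum _ h,
    D_sq (hU.differentiable_D τ), mul_add, Finset.mul_sum]
  congr 1
  exact Finset.sum_congr rfl fun i _ => D_sq (hU.differentiable_D (e i)) w q

lemma en_nonneg (U : E d × ℝ → ℝ) (q : E d × ℝ) : 0 ≤ en U q := by unfold en; positivity

/-- A smooth substitute for the norm, at distance at most one from it. -/
def jb (x : E d) : ℝ := √(1 + ‖x‖ ^ 2)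

lemma contDiff_jb : ContDiff ℝ 2 (jb : E d → ℝ) := by
  unfold jb
  exact (contDiff_const.add (contDiff_norm_sq ℝ)).sqrt fun x => by positivity

lemma norm_le_jb (x : E d) : ‖x‖ ≤ jb x := Real.le_sqrt_of_sq_le (by linarith)

lemma jb_le (x : E d) : jb x ≤ 1 + ‖x‖ := by
  unfold jb
  rw [Real.sqrt_le_left (by positivity)]
  nlinarith [norm_nonneg x]

/-- A smooth decreasing step: `1` on the negative half-line and `0` on `[1, ∞)`. -/
def step (s : ℝ) : ℝ := Real.smoothTransition (1 - s)

lemma contDiff_step {n : ℕ∞} : ContDiff ℝ n step :=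
  Real.smoothTransition.contDiff.comp (contDiff_const.sub contDiff_id)

lemma antitone_step : Antitone step := fun a b h => by
  unfold step
  exact Real.smoothTransition.monotone (by linarith)

lemma step_nonneg (s : ℝ) : 0 ≤ step s := Real.smoothTransition.nonneg _
lemma step_le_one (s : ℝ) : step s ≤ 1 := Real.smoothTransition.le_one _
lemma step_eq_one {s : ℝ} (h : s ≤ 0) : step s = 1 :=
  Real.smoothTransition.one_of_one_le (by linarith)
lemma step_eq_zero {s : ℝ} (h : 1 ≤ s) : step s = 0 :=
  Real.smoothTransition.zero_of_nonpos (by linarith)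
lemma deriv_step_nonpos (s : ℝ) : deriv step s ≤ 0 := antitone_step.deriv_nonpos

/-- A smooth cutoff to the backward light cone `‖x‖ ≤ K - t`, up to an error of size one: it equals
`1` where `‖x‖ ≤ K - 1 - t` and `0` where `‖x‖ ≥ K + 1 - t`. -/
def cone (K : ℝ) (q : E d × ℝ) : ℝ := step (jb q.1 + q.2 - K)

lemma contDiff_cone (K : ℝ) : ContDiff ℝ 2 (cone K : E d × ℝ → ℝ) :=
  (contDiff_step (n := 2)).comp
    (((contDiff_jb.comp contDiff_fst).add contDiff_snd).sub contDiff_const)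

lemma cone_CS (K : ℝ) : CS (cone K : E d × ℝ → ℝ) := fun T =>
  ⟨K + 1 + T, fun x t ht hx => step_eq_zero (by
    have := norm_le_jb x
    have := neg_abs_le t
    simp only
    linarith)⟩

lemma hasFDerivAt_jb (x : E d) :
    HasFDerivAt (jb : E d → ℝ) ((1 / jb x) • innerSL ℝ x) x := by
  have h1 : HasFDerivAt (fun x : E d => 1 + ‖x‖ ^ 2) (2 • innerSL ℝ x) x :=
    (hasStrictFDerivAt_norm_sq x).hasFDerivAt.const_add 1
  have h2 := h1.sqrt (by positivity)
  convert! h2 using 1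
  ext y
  simp [jb]
  field_simp

lemma D_cone (K : ℝ) (w q : E d × ℝ) : D w (cone K) q =
    deriv step (jb q.1 + q.2 - K) * (1 / jb q.1 * inner ℝ q.1 w.1 + w.2) := by
  have h1 : HasFDerivAt (fun q : E d × ℝ => jb q.1 + q.2 - K)
      (((1 / jb q.1) • innerSL ℝ q.1).comp (ContinuousLinearMap.fst ℝ (E d) ℝ) +
        ContinuousLinearMap.snd ℝ (E d) ℝ) q :=
    (((hasFDerivAt_jb q.1).comp q hasFDerivAt_fst).add hasFDerivAt_snd).sub_const K
  have h2 : HasDerivAt step (deriv step (jb q.1 + q.2 - K)) (jb q.1 + q.2 - K) :=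
    ((contDiff_step (n := 1)).differentiable one_ne_zero _).hasDerivAt
  have h3 := h2.comp_hasFDerivAt q h1
  have h4 : fderiv ℝ (cone K) q = _ := h3.fderiv
  unfold D
  rw [h4]
  simp
  ring

/-- The energy inside a shrinking light cone decreases. The flux `2 |∂ₜU| |∇U|` is at most the energy
density, and the gradient of the cutoff is at most minus its time derivative in size, so the flux
through the boundary of the cone cannot make up for the loss due to the shrinking. -/
lemma energy_antitone {U : E d × ℝ → ℝ} (hU : IsWave U) (K : ℝ) :
    Antitone fun t => ∫ x, cone K (x, t) * en U (x, t) := by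
  have hcone : Differentiable ℝ (cone K : E d × ℝ → ℝ) :=
    (contDiff_cone K).differentiable two_ne_zero
  have hcone1 : ContDiff ℝ 1 (cone K : E d × ℝ → ℝ) := (contDiff_cone K).of_le (by norm_num)
  have hp := fun i : Fin d => hU.differentiable_D (e i)
  have hg := hU.differentiable_D τ
  refine antitone_integral (f := fun q => cone K q * en U q)
    (F := fun i q => cone K q * (2 * (D τ U q * D (e i) U q)))
    (cone_CS K).mul_right (hcone1.mul hU.contDiff_en) (fun i => (cone_CS K).mul_right)
    (fun i => hcone1.mul (contDiff_const.mul ((hU.contDiff_D τ).mul (hU.contDiff_D (e i))))) ?_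
  intro q
  rw [D_mul hcone (hU.contDiff_en.differentiable one_ne_zero), hU.D_en, hU.pde]
  have hF : ∀ i : Fin d, D (e i) (fun q => cone K q * (2 * (D τ U q * D (e i) U q))) q =
      D (e i) (cone K) q * (2 * (D τ U q * D (e i) U q)) +
        cone K q * (2 * (D τ (D (e i) U) q * D (e i) U q + D τ U q * D (e i) (D (e i) U) q)) := by
    intro i
    rw [D_mul hcone ((hg.fun_mul (hp i)).const_mul 2), D_const_mul (hg.fun_mul (hp i)), D_mul hg (hp i),
      D_comm hU.smooth (e i) τ]
  simp only [hF]
  set s := deriv step (jb q.1 + q.2 - K) with hs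
  have hs0 : s ≤ 0 := deriv_step_nonpos _
  have hjb : 0 < jb q.1 := by unfold jb; positivity
  set c : Fin d → ℝ := fun i => 1 / jb q.1 * q.1 i with hc
  have hDi : ∀ i : Fin d, D (e i) (cone K) q = s * c i := by
    intro i
    simp [D_cone, e, hc, hs, EuclideanSpace.inner_single_right]
  have hDt : D τ (cone K) q = s := by simp [D_cone, τ, hs]
  have hcsum : ∑ i, c i ^ 2 ≤ 1 := by
    simp only [hc, mul_pow, ← Finset.mul_sum]
    rw [← EuclideanSpace.real_norm_sq_eq, one_div, inv_pow, inv_mul_le_iff₀ (by positivity), jb,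
      Real.sq_sqrt (by positivity)]
    linarith
  simp only [hDi, hDt]
  -- `|c| ≤ 1`, so the flux in the direction `c` is at most the energy density
  have key : 0 ≤ en U q - ∑ i, c i * (2 * (D τ U q * D (e i) U q)) := by
    have h1 : 0 ≤ ∑ i, (c i * D τ U q - D (e i) U q) ^ 2 := by positivity
    have h2 : ∑ i, (c i * D τ U q - D (e i) U q) ^ 2 = (∑ i, c i ^ 2) * D τ U q ^ 2 -
        ∑ i, c i * (2 * (D τ U q * D (e i) U q)) + ∑ i, D (e i) U q ^ 2 := by
      rw [Finset.sum_mul, ← Finset.sum_sub_distrib, ← Finset.sum_add_distrib]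
      exact Finset.sum_congr rfl fun i _ => by ring
    unfold en
    nlinarith [sq_nonneg (D τ U q)]
  have hsum : ∑ i, (s * c i * (2 * (D τ U q * D (e i) U q)) +
        cone K q * (2 * (D τ (D (e i) U) q * D (e i) U q + D τ U q * D (e i) (D (e i) U) q))) =
      s * ∑ i, c i * (2 * (D τ U q * D (e i) U q)) +
        cone K q * (2 * (∑ i, D (e i) U q * D τ (D (e i) U) q +
          D τ U q * ∑ i, D (e i) (D (e i) U) q)) := by
    rw [Finset.mul_sum, Finset.mul_sum, ← Finset.sum_add_distrib, Finset.mul_sum, Finset.mul_sum,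
      ← Finset.sum_add_distrib]
    exact Finset.sum_congr rfl fun i _ => by ring
  rw [hsum]
  nlinarith [mul_nonneg (neg_nonneg.2 hs0) key]

/-! ### Domain of dependence -/

lemma D_rev (w : E d × ℝ) {f : E d × ℝ → ℝ} (hf : Differentiable ℝ f) (q : E d × ℝ) :
    D w (fun q => f (q.1, -q.2)) q = D (w.1, -w.2) f (q.1, -q.2) := by
  have h1 : HasFDerivAt (fun q : E d × ℝ => (q.1, -q.2))
      ((ContinuousLinearMap.fst ℝ (E d) ℝ).prod (-ContinuousLinearMap.snd ℝ (E d) ℝ)) q :=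
    hasFDerivAt_fst.prodMk hasFDerivAt_snd.neg
  have h2 := (hf (q.1, -q.2)).hasFDerivAt.comp q h1
  have h3 : fderiv ℝ (fun q : E d × ℝ => f (q.1, -q.2)) q = _ := h2.fderiv
  unfold D
  rw [h3]
  simp

lemma D_neg_dir (w : E d × ℝ) (f : E d × ℝ → ℝ) : D (-w) f = fun q => - D w f q := by
  ext q; simp [D]

lemma D_e_rev (i : Fin d) {f : E d × ℝ → ℝ} (hf : Differentiable ℝ f) :
    D (e i) (fun q => f (q.1, -q.2)) = fun q => D (e i) f (q.1, -q.2) := by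
  ext q; rw [D_rev _ hf]; simp [e]

lemma D_tau_rev {f : E d × ℝ → ℝ} (hf : Differentiable ℝ f) :
    D τ (fun q => f (q.1, -q.2)) = fun q => -D τ f (q.1, -q.2) := by
  ext q
  rw [D_rev _ hf]
  have : (((τ : E d × ℝ).1, -(τ : E d × ℝ).2) : E d × ℝ) = -τ := by simp [τ]
  rw [this, D_neg_dir]

lemma IsWave.differentiable {U : E d × ℝ → ℝ} (hU : IsWave U) : Differentiable ℝ U :=
  hU.smooth.differentiable two_ne_zero

lemma contDiff_reflect {n : WithTop ℕ∞} : ContDiff ℝ n fun q : E d × ℝ => (q.1, -q.2) :=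
  contDiff_fst.prodMk contDiff_snd.neg

/-- Waves may be run backwards in time. -/
lemma IsWave.rev {U : E d × ℝ → ℝ} (hU : IsWave U) : IsWave fun q => U (q.1, -q.2) where
  smooth := hU.smooth.comp contDiff_reflect
  pde q := by
    have h := hU.pde (q.1, -q.2)
    rw [D_tau_rev hU.differentiable]
    have h1 : Differentiable ℝ (fun q : E d × ℝ => D τ U (q.1, -q.2)) :=
      (hU.differentiable_D τ).comp ((contDiff_reflect (n := 1)).differentiable one_ne_zero)
    have h2 : D τ (fun q : E d × ℝ => -D τ U (q.1, -q.2)) q = D τ (D τ U) (q.1, -q.2) := by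
      have := D_const_mul h1 (-1) τ q
      simp only [neg_mul, one_mul] at this
      rw [this, D_tau_rev (hU.differentiable_D τ)]
      simp
    rw [h2, h]
    refine Finset.sum_congr rfl fun i _ => ?_
    rw [D_e_rev i hU.differentiable, D_e_rev i (hU.differentiable_D _)]

lemma IsWave.en_rev {U : E d × ℝ → ℝ} (hU : IsWave U) (q : E d × ℝ) :
    en (fun q => U (q.1, -q.2)) q = en U (q.1, -q.2) := by
  simp [en, D_tau_rev hU.differentiable, D_e_rev _ hU.differentiable]

lemma IsWave.sub {U W : E d × ℝ → ℝ} (hU : IsWave U) (hW : IsWave W) :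
    IsWave fun q => U q - W q where
  smooth := hU.smooth.sub hW.smooth
  pde q := by
    have h : ∀ w : E d × ℝ, D w (D w fun q => U q - W q) q = D w (D w U) q - D w (D w W) q := by
      intro w
      have : (D w fun q => U q - W q) = fun q => D w U q - D w W q :=
        funext fun q => D_sub hU.differentiable hW.differentiable w q
      rw [this, D_sub (hU.differentiable_D w) (hW.differentiable_D w)]
    simp only [h, hU.pde, hW.pde, Finset.sum_sub_distrib]

lemma continuous_slice (t : ℝ) : Continuous fun x : E d => (x, t) := by fun_prop

lemma IsWave.continuous_en {U : E d × ℝ → ℝ} (hU : IsWave U) (t : ℝ) :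
    Continuous fun x => en U (x, t) :=
  hU.contDiff_en.continuous.comp (continuous_slice t)

lemma IsWave.integrableOn_en {U : E d × ℝ → ℝ} (hU : IsWave U) (t ρ : ℝ) :
    IntegrableOn (fun x => en U (x, t)) (closedBall 0 ρ) :=
  (hU.continuous_en t).continuousOn.integrableOn_compact (isCompact_closedBall _ _)

lemma IsWave.energy_ball_le_aux {U : E d × ℝ → ℝ} (hU : IsWave U) (ρ : ℝ) {s t : ℝ} (hst : s ≤ t) :
    ∫ x in closedBall (0 : E d) ρ, en U (x, t) ≤
      ∫ x in closedBall (0 : E d) (ρ + 2 + (t - s)), en U (x, s) := by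
  have hint : ∀ r, Integrable fun x => cone (t + ρ + 1) (x, r) * en U (x, r) := fun r =>
    CS.integrable (f := fun q => cone (t + ρ + 1) q * en U q) (cone_CS _).mul_right
      ((contDiff_cone _).continuous.mul hU.contDiff_en.continuous) r
  calc ∫ x in closedBall (0 : E d) ρ, en U (x, t)
      = ∫ x, (closedBall (0 : E d) ρ).indicator (fun x => en U (x, t)) x :=
        (integral_indicator measurableSet_closedBall).symm
    _ ≤ ∫ x, cone (t + ρ + 1) (x, t) * en U (x, t) := by
        refine integral_mono ((integrable_indicator_iff measurableSet_closedBall).2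
          (hU.integrableOn_en t ρ)) (hint t) fun x => ?_
        by_cases hx : x ∈ closedBall (0 : E d) ρ
        · simp only [hx, Set.indicator_of_mem]
          have h1 : cone (t + ρ + 1) (x, t) = 1 := step_eq_one (by
            have := jb_le x
            have : ‖x‖ ≤ ρ := by simpa using hx
            simp only
            linarith)
          rw [h1, one_mul]
        · simp only [hx, not_false_eq_true, Set.indicator_of_notMem]
          exact mul_nonneg (step_nonneg _) (en_nonneg _ _)
    _ ≤ ∫ x, cone (t + ρ + 1) (x, s) * en U (x, s) := energy_antitone hU _ hst
    _ ≤ ∫ x, (closedBall (0 : E d) (ρ + 2 + (t - s))).indicator (fun x => en U (x, s)) x := by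
        refine integral_mono (hint s) ((integrable_indicator_iff measurableSet_closedBall).2
          (hU.integrableOn_en s _)) fun x => ?_
        by_cases hx : x ∈ closedBall (0 : E d) (ρ + 2 + (t - s))
        · simp only [hx, Set.indicator_of_mem]
          exact mul_le_of_le_one_left (en_nonneg _ _) (step_le_one _)
        · simp only [hx, not_false_eq_true, Set.indicator_of_notMem]
          have h1 : cone (t + ρ + 1) (x, s) = 0 := step_eq_zero (by
            have := norm_le_jb x
            have : ρ + 2 + (t - s) < ‖x‖ := by simpa using hx
            simp only
            linarith)
          rw [h1, zero_mul]
    _ = _ := integral_indicator measurableSet_closedBall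

/-- Domain of dependence: the energy of a ball is bounded by that of a larger ball at another
time. The radius grows by `2` more than the sharp amount because of the smooth cutoff. -/
lemma IsWave.energy_ball_le {U : E d × ℝ → ℝ} (hU : IsWave U) (ρ s t : ℝ) :
    ∫ x in closedBall (0 : E d) ρ, en U (x, t) ≤
      ∫ x in closedBall (0 : E d) (ρ + 2 + |t - s|), en U (x, s) := by
  rcases le_total s t with h | h
  · rw [abs_of_nonneg (sub_nonneg.2 h)]
    exact hU.energy_ball_le_aux ρ h
  · rw [abs_of_nonpos (sub_nonpos.2 h)]
    have := hU.rev.energy_ball_le_aux ρ (neg_le_neg h)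
    simp only [hU.en_rev, neg_neg] at this
    convert! this using 4
    ring

lemma IsWave.integrable_en {U : E d × ℝ → ℝ} (hU : IsWave U) {s : ℝ}
    (h : Integrable fun x => en U (x, s)) (t : ℝ) : Integrable fun x => en U (x, t) := by
  refine (aecover_closedBall (x := (0 : E d)) tendsto_id).integrable_of_integral_bounded_of_nonneg_ae
    (∫ x, en U (x, s)) (fun ρ => hU.integrableOn_en t ρ)
    (Eventually.of_forall fun x => en_nonneg _ _) (Eventually.of_forall fun ρ => ?_)
  exact (hU.energy_ball_le ρ s t).trans
    (setIntegral_le_integral h (Eventually.of_forall fun x => en_nonneg _ _))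

lemma IsWave.energy_le {U : E d × ℝ → ℝ} (hU : IsWave U) {s : ℝ}
    (h : Integrable fun x => en U (x, s)) (t : ℝ) : ∫ x, en U (x, t) ≤ ∫ x, en U (x, s) := by
  refine le_of_tendsto ((aecover_closedBall (x := (0 : E d))
    tendsto_id).integral_tendsto_of_countably_generated (hU.integrable_en h t))
    (Eventually.of_forall fun ρ => ?_)
  exact (hU.energy_ball_le ρ s t).trans
    (setIntegral_le_integral h (Eventually.of_forall fun x => en_nonneg _ _))

/-- Energy conservation. -/
lemma IsWave.energy_eq {U : E d × ℝ → ℝ} (hU : IsWave U) {s : ℝ}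
    (h : Integrable fun x => en U (x, s)) (t : ℝ) : ∫ x, en U (x, t) = ∫ x, en U (x, s) :=
  le_antisymm (hU.energy_le h t) (hU.energy_le (hU.integrable_en h t) s)

/-- The energy outside a ball expanding at unit speed is controlled by the initial energy outside
the initial ball: the complement of the domain of dependence estimate. -/
lemma IsWave.energy_compl_le {U : E d × ℝ → ℝ} (hU : IsWave U)
    (h : Integrable fun x => en U (x, 0)) (ρ t : ℝ) :
    ∫ x in (closedBall (0 : E d) (ρ + 2 + |t|))ᶜ, en U (x, t) ≤
      ∫ x in (closedBall (0 : E d) ρ)ᶜ, en U (x, 0) := by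
  have h1 := integral_add_compl (measurableSet_closedBall (x := (0 : E d)) (ε := ρ + 2 + |t|))
    (hU.integrable_en h t)
  have h2 := integral_add_compl (measurableSet_closedBall (x := (0 : E d)) (ε := ρ)) h
  have h3 := hU.energy_ball_le ρ t 0
  have h4 := hU.energy_eq h t
  simp only [zero_sub, abs_neg] at h3
  linarith

lemma tendsto_integral_compl {f : E d → ℝ} (h : Integrable f) :
    Tendsto (fun ρ : ℝ => ∫ x in (closedBall (0 : E d) ρ)ᶜ, f x) atTop (𝓝 0) := by
  have h1 := (aecover_closedBall (μ := volume) (x := (0 : E d))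
    tendsto_id).integral_tendsto_of_countably_generated h
  have h2 := h1.const_sub (∫ x, f x)
  rw [sub_self] at h2
  refine h2.congr fun ρ => ?_
  have := integral_add_compl (measurableSet_closedBall (x := (0 : E d)) (ε := ρ)) h
  simp only [id]
  linarith

/-- Initial data supported in a ball lead to a wave supported in the expanding ball. -/
lemma IsWave.eq_zero_of_data {U : E d × ℝ → ℝ} (hU : IsWave U) {ρ : ℝ}
    (h0 : ∀ x, ρ < ‖x‖ → U (x, 0) = 0 ∧ en U (x, 0) = 0) (x : E d) (t : ℝ)
    (hx : ρ + 2 + |t| < ‖x‖) : U (x, t) = 0 := by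
  have hint : Integrable fun x => en U (x, 0) := by
    refine (hU.continuous_en 0).integrable_of_hasCompactSupport
      (HasCompactSupport.intro (isCompact_closedBall (0 : E d) ρ) fun x hx => ?_)
    exact (h0 x (by simpa using hx)).2
  have hz : ∫ x in (closedBall (0 : E d) ρ)ᶜ, en U (x, 0) = 0 := by
    rw [setIntegral_eq_zero_of_forall_eq_zero]
    intro x hx
    exact (h0 x (by simpa using hx)).2
  have hen : ∀ y s, ρ + 2 + |s| < ‖y‖ → en U (y, s) = 0 := by
    intro y s hy
    have h1 : ∫ x in (closedBall (0 : E d) (ρ + 2 + |s|))ᶜ, en U (x, s) = 0 :=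
      le_antisymm ((hU.energy_compl_le hint ρ s).trans hz.le)
        (integral_nonneg fun x => en_nonneg _ _)
    rw [integral_eq_zero_iff_of_nonneg (fun x => en_nonneg _ _)
      (hU.integrable_en hint s).integrableOn] at h1
    have h2 := Measure.eqOn_open_of_ae_eq h1 isClosed_closedBall.isOpen_compl
      (hU.continuous_en s).continuousOn continuousOn_const
    exact h2 (by simpa using hy)
  have hd : ∀ s ∈ Set.uIcc 0 t, D τ U (x, s) = 0 := by
    intro s hs
    have hs' : |s| ≤ |t| := by
      rcases Set.mem_uIcc.1 hs with h | h
      · rw [abs_of_nonneg h.1, abs_of_nonneg (h.1.trans h.2)]; exact h.2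
      · rw [abs_of_nonpos h.2, abs_of_nonpos (h.1.trans h.2)]; linarith
    have h1 := hen x s (by linarith)
    unfold en at h1
    have h2 : 0 ≤ ∑ i, D (e i) U (x, s) ^ 2 := by positivity
    nlinarith [sq_nonneg (D τ U (x, s))]
  have h3 := intervalIntegral.integral_eq_sub_of_hasDerivAt (a := 0) (b := t)
    (fun s _ => hasDerivAt_slice_time hU.differentiable x s)
    (((hU.contDiff_D τ).continuous.comp (by fun_prop : Continuous fun s : ℝ => (x, s))).intervalIntegrable _ _)
  rw [intervalIntegral.integral_congr (g := fun _ => (0 : ℝ)) hd] at h3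
  have h4 := (h0 x (by linarith [abs_nonneg t])).1
  simp at h3
  linarith

/-! ### The dilation identity for waves of spatially bounded support -/

lemma hasFDerivAt_coord (j : Fin d) (q : E d × ℝ) : HasFDerivAt (fun q : E d × ℝ => q.1 j)
    ((EuclideanSpace.proj j : E d →L[ℝ] ℝ).comp (ContinuousLinearMap.fst ℝ (E d) ℝ)) q :=
  ((EuclideanSpace.proj j : E d →L[ℝ] ℝ).comp (ContinuousLinearMap.fst ℝ (E d) ℝ)).hasFDerivAt

lemma D_coord (j : Fin d) (w q : E d × ℝ) : D w (fun q : E d × ℝ => q.1 j) q = w.1 j := by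
  unfold D
  rw [(hasFDerivAt_coord j q).fderiv]
  simp

lemma D_time (w q : E d × ℝ) : D w (fun q : E d × ℝ => q.2) q = w.2 := by
  unfold D
  rw [hasFDerivAt_snd.fderiv]
  simp

lemma contDiff_coord {n : WithTop ℕ∞} (j : Fin d) : ContDiff ℝ n (fun q : E d × ℝ => q.1 j) :=
  ((EuclideanSpace.proj j : E d →L[ℝ] ℝ).comp (ContinuousLinearMap.fst ℝ (E d) ℝ)).contDiff

lemma differentiable_coord (j : Fin d) : Differentiable ℝ (fun q : E d × ℝ => q.1 j) :=
  (contDiff_coord (n := 1) j).differentiable one_ne_zero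

/-- The radial derivative `x · ∇U`. -/
def rad (U : E d × ℝ → ℝ) (q : E d × ℝ) : ℝ := ∑ j, q.1 j * D (e j) U q

/-- The spatial part `x · ∇U + (d - 1) / 2 * U` of the dilation multiplier. -/
def mult (U : E d × ℝ → ℝ) (q : E d × ℝ) : ℝ := rad U q + ((d : ℝ) - 1) / 2 * U q

/-- The density `t (|∇U|² + |∂ₜU|²) / 2 + ∂ₜU (x · ∇U + (d - 1) / 2 * U)` of the conserved quantity
associated with dilations of space-time. -/
def dil (U : E d × ℝ → ℝ) (q : E d × ℝ) : ℝ := q.2 * (1 / 2 * en U q) + D τ U q * mult U q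

/-- The spatial flux of `dil`. -/
def dilFlux (U : E d × ℝ → ℝ) (i : Fin d) (q : E d × ℝ) : ℝ :=
  q.2 * (D τ U q * D (e i) U q) + D (e i) U q * mult U q +
    q.1 i * (D τ U q ^ 2 + (-1 / 2) * en U q)

lemma IsWave.contDiff_mult {U : E d × ℝ → ℝ} (hU : IsWave U) : ContDiff ℝ 1 (mult U) := by
  unfold mult rad
  exact (ContDiff.sum fun j _ => (contDiff_coord j).mul (hU.contDiff_D _)).add
    (contDiff_const.mul (hU.smooth.of_le (by norm_num)))

lemma IsWave.D_mult {U : E d × ℝ → ℝ} (hU : IsWave U) (w q : E d × ℝ) : D w (mult U) q =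
    ∑ j, (w.1 j * D (e j) U q + q.1 j * D w (D (e j) U) q) + ((d : ℝ) - 1) / 2 * D w U q := by
  have h : ∀ j : Fin d, Differentiable ℝ fun q : E d × ℝ => q.1 j * D (e j) U q := fun j =>
    (differentiable_coord j).fun_mul (hU.differentiable_D _)
  change D w (fun q => ∑ j, q.1 j * D (e j) U q + ((d : ℝ) - 1) / 2 * U q) q = _
  rw [D_add (Differentiable.fun_sum fun i _ => h i) (hU.differentiable.const_mul _), D_sum _ h,
    D_const_mul hU.differentiable]
  congr 1
  refine Finset.sum_congr rfl fun j _ => ?_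
  rw [D_mul (differentiable_coord j) (hU.differentiable_D _), D_coord]

/-- The local conservation law of dilations: multiply the wave equation by
`t ∂ₜU + x · ∇U + (d - 1) / 2 * U`. -/
lemma IsWave.dil_conservation {U : E d × ℝ → ℝ} (hU : IsWave U) (q : E d × ℝ) :
    D τ (dil U) q = ∑ i, D (e i) (dilFlux U i) q := by
  have hg := hU.differentiable_D τ
  have hp := fun i : Fin d => hU.differentiable_D (e i)
  have hen : Differentiable ℝ (en U) := hU.contDiff_en.differentiable one_ne_zero
  have hS : Differentiable ℝ (mult U) := hU.contDiff_mult.differentiable one_ne_zero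
  have h1 : D τ (dil U) q = 1 / 2 * en U q +
      q.2 * (∑ i, D (e i) U q * D τ (D (e i) U) q + D τ U q * D τ (D τ U) q) +
      (D τ (D τ U) q * mult U q + D τ U q * (∑ j, q.1 j * D τ (D (e j) U) q +
        ((d : ℝ) - 1) / 2 * D τ U q)) := by
    change D τ (fun q => q.2 * (1 / 2 * en U q) + D τ U q * mult U q) q = _
    rw [D_add (differentiable_snd.fun_mul (hen.const_mul _)) (hg.fun_mul hS),
      D_mul differentiable_snd (hen.const_mul _), D_time, D_const_mul hen, D_mul hg hS, hU.D_en,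
      hU.D_mult]
    simp [τ]
  have h2 : ∀ i, D (e i) (dilFlux U i) q =
      q.2 * (D τ (D (e i) U) q * D (e i) U q + D τ U q * D (e i) (D (e i) U) q) +
      (D (e i) (D (e i) U) q * mult U q + D (e i) U q * (D (e i) U q +
        ∑ j, q.1 j * D (e i) (D (e j) U) q + ((d : ℝ) - 1) / 2 * D (e i) U q)) +
      (D τ U q ^ 2 - 1 / 2 * en U q +
        q.1 i * (D τ U q * D τ (D (e i) U) q - ∑ j, D (e j) U q * D (e i) (D (e j) U) q)) := by
    intro i
    change D (e i) (fun q => q.2 * (D τ U q * D (e i) U q) + D (e i) U q * mult U q +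
      q.1 i * (D τ U q ^ 2 + (-1 / 2) * en U q)) q = _
    rw [D_add ((differentiable_snd.fun_mul (hg.fun_mul (hp i))).fun_add ((hp i).fun_mul hS))
        ((differentiable_coord i).fun_mul ((hg.fun_pow 2).fun_add (hen.const_mul _))),
      D_add (differentiable_snd.fun_mul (hg.fun_mul (hp i))) ((hp i).fun_mul hS),
      D_mul differentiable_snd (hg.fun_mul (hp i)), D_time, D_mul hg (hp i), D_mul (hp i) hS,
      D_mul (differentiable_coord i) ((hg.fun_pow 2).fun_add (hen.const_mul _)), D_coord,
      D_add (hg.fun_pow 2) (hen.const_mul _), D_sq hg, D_const_mul hen, hU.D_en, hU.D_mult,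
      D_comm hU.smooth (e i) τ, Finset.sum_add_distrib]
    have hs : ∑ j, (e i : E d × ℝ).1 j * D (e j) U q = D (e i) U q := by simp [e]
    rw [hs]
    simp only [e, PiLp.single_apply, if_true]
    ring
  have hen' : en U q = ∑ i, (D (e i) U q) ^ 2 + (D τ U q) ^ 2 := rfl
  -- symmetry of second derivatives makes the two double sums agree
  have hswap : ∑ i, D (e i) U q * ∑ j, q.1 j * D (e i) (D (e j) U) q =
      ∑ i, q.1 i * ∑ j, D (e j) U q * D (e i) (D (e j) U) q := by
    simp only [Finset.mul_sum]
    rw [Finset.sum_comm]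
    refine Finset.sum_congr rfl fun i _ => Finset.sum_congr rfl fun j _ => ?_
    rw [D_comm hU.smooth (e j) (e i)]
    ring
  rw [h1, Finset.sum_congr rfl fun i _ => h2 i, hU.pde]
  simp only [mul_add, mul_sub, Finset.sum_add_distrib, Finset.sum_sub_distrib, hswap,
    Finset.sum_const, Finset.card_univ, Fintype.card_fin, nsmul_eq_mul]
  have e1 : ∑ i, q.2 * (D τ (D (e i) U) q * D (e i) U q) =
      q.2 * ∑ i, D (e i) U q * D τ (D (e i) U) q := by
    rw [Finset.mul_sum]; exact Finset.sum_congr rfl fun i _ => by ring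
  have e2 : ∑ i, q.2 * (D τ U q * D (e i) (D (e i) U) q) =
      q.2 * (D τ U q * ∑ i, D (e i) (D (e i) U) q) := by
    rw [Finset.mul_sum, Finset.mul_sum]
  have e3 : ∑ i, D (e i) (D (e i) U) q * mult U q = (∑ i, D (e i) (D (e i) U) q) * mult U q := by
    rw [Finset.sum_mul]
  have e4 : ∑ i, D (e i) U q * D (e i) U q = ∑ i, (D (e i) U q) ^ 2 :=
    Finset.sum_congr rfl fun i _ => by ring
  have e5 : ∑ i, D (e i) U q * (((d : ℝ) - 1) / 2 * D (e i) U q) =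
      ((d : ℝ) - 1) / 2 * ∑ i, (D (e i) U q) ^ 2 := by
    rw [Finset.mul_sum]; exact Finset.sum_congr rfl fun i _ => by ring
  have e6 : ∑ i, q.1 i * (D τ U q * D τ (D (e i) U) q) =
      D τ U q * ∑ i, q.1 i * D τ (D (e i) U) q := by
    rw [Finset.mul_sum]; exact Finset.sum_congr rfl fun i _ => by ring
  rw [e1, e2, e3, e4, e5, e6, hen']
  ring

/-- The weight `2t / (t² + |x|²)`, the reciprocal of a smooth majorant of `|x|`. -/
def wt (t : ℝ) (q : E d × ℝ) : ℝ := 2 * t / (t ^ 2 + ‖q.1‖ ^ 2)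

lemma contDiff_wt {t : ℝ} (ht : 0 < t) {n : WithTop ℕ∞} : ContDiff ℝ n (wt t : E d × ℝ → ℝ) :=
  contDiff_const.div (contDiff_const.add ((contDiff_norm_sq ℝ).comp contDiff_fst))
    fun q => by positivity

lemma D_e_wt {t : ℝ} (ht : 0 < t) (i : Fin d) (q : E d × ℝ) :
    D (e i) (wt t) q = - (wt t q ^ 2 / t) * q.1 i := by
  have h0 : HasFDerivAt (fun q : E d × ℝ => t ^ 2 + ‖q.1‖ ^ 2)
      ((2 • innerSL ℝ q.1).comp (ContinuousLinearMap.fst ℝ (E d) ℝ)) q :=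
    ((hasStrictFDerivAt_norm_sq q.1).hasFDerivAt.comp q hasFDerivAt_fst).const_add _
  have hpos : t ^ 2 + ‖q.1‖ ^ 2 ≠ 0 := by positivity
  have h1 := ((hasDerivAt_inv hpos).const_mul (2 * t)).comp_hasFDerivAt q h0
  have h2 : fderiv ℝ (wt t) q = _ := h1.fderiv
  unfold D
  rw [h2]
  simp [e, wt, EuclideanSpace.inner_single_right]
  field_simp

/-- The divergence of the vector field `wt · x U²`, which is added to the dilation density to make
its zeroth order part nonnegative. -/
lemma IsWave.D_wt_flux {U : E d × ℝ → ℝ} (hU : IsWave U) {t : ℝ} (ht : 0 < t) (q : E d × ℝ) :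
    ∑ i, D (e i) (fun q => wt t q * (q.1 i * U q ^ 2)) q =
      (d * wt t q - wt t q ^ 2 * ‖q.1‖ ^ 2 / t) * U q ^ 2 + 2 * wt t q * U q * rad U q := by
  have h1 : Differentiable ℝ (wt t : E d × ℝ → ℝ) :=
    (contDiff_wt (n := 1) ht).differentiable one_ne_zero
  have h2 := hU.differentiable.fun_pow 2
  have h : ∀ i, D (e i) (fun q => wt t q * (q.1 i * U q ^ 2)) q =
      - (wt t q ^ 2 / t) * U q ^ 2 * (q.1 i) ^ 2 + wt t q * U q ^ 2 +
        2 * wt t q * U q * (q.1 i * D (e i) U q) := by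
    intro i
    rw [D_mul h1 ((differentiable_coord i).fun_mul h2), D_e_wt ht, D_mul (differentiable_coord i) h2,
      D_coord, D_sq hU.differentiable]
    simp only [e, PiLp.single_apply, if_true]
    ring
  simp only [h, Finset.sum_add_distrib, ← Finset.mul_sum, Finset.sum_const, Finset.card_univ,
    Fintype.card_fin, nsmul_eq_mul]
  rw [← EuclideanSpace.real_norm_sq_eq, rad]
  ring

lemma rad_sq_le (U : E d × ℝ → ℝ) (q : E d × ℝ) :
    rad U q ^ 2 ≤ ‖q.1‖ ^ 2 * ∑ i, (D (e i) U q) ^ 2 := by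
  rw [EuclideanSpace.real_norm_sq_eq]
  exact Finset.sum_mul_sq_le_sq_mul_sq _ _ _

/-- The pointwise inequality behind the decay: up to a divergence, the dilation density dominates
an energy density with weight comparable to `t - |x|`. This is where `3 ≤ d` enters. -/
lemma dil_lower (hd : 3 ≤ d) (U : E d × ℝ → ℝ) {x : E d} {t : ℝ} (ht : 0 < t) :
    (t ^ 2 - ‖x‖ ^ 2) / (2 * t) * D τ U (x, t) ^ 2 +
      t * (t ^ 2 - ‖x‖ ^ 2) / (t ^ 2 + ‖x‖ ^ 2) * ∑ i, D (e i) U (x, t) ^ 2 ≤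
    2 * dil U (x, t) + ((d : ℝ) - 1) / 2 *
      ((d * wt t (x, t) - wt t (x, t) ^ 2 * ‖x‖ ^ 2 / t) * U (x, t) ^ 2 +
        2 * wt t (x, t) * U (x, t) * rad U (x, t)) := by
  have hd' : (3 : ℝ) ≤ d := by exact_mod_cast hd
  have hr := rad_sq_le U (x, t)
  simp only [dil, mult, en]
  set r := ‖x‖
  set P := ∑ i, D (e i) U (x, t) ^ 2
  set g := D τ U (x, t)
  set X := rad U (x, t)
  set u := U (x, t)
  set m := ((d : ℝ) - 1) / 2 with hm
  set k := wt t (x, t) with hk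
  have hk' : k = 2 * t / (t ^ 2 + r ^ 2) := rfl
  have hkpos : 0 < k := by rw [hk']; positivity
  have hkr : k * r ^ 2 / t ≤ 2 := by
    rw [hk', div_mul_eq_mul_div, div_div, div_le_iff₀ (by positivity)]
    nlinarith [pow_pos ht 3]
  have hw : (t ^ 2 - r ^ 2) / (2 * t) = t - 1 / k := by rw [hk']; field_simp; ring
  have hw2 : t * (t ^ 2 - r ^ 2) / (t ^ 2 + r ^ 2) = t - k * r ^ 2 := by rw [hk']; field_simp; ring
  rw [hw, hw2]
  -- completing the square in `∂ₜU`, with the multiplier `X + m u` as the other term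
  have hsq : 0 ≤ 1 / k * (g + k * (X + m * u)) ^ 2 := by positivity
  have hsq' : 1 / k * (g + k * (X + m * u)) ^ 2 =
      1 / k * g ^ 2 + 2 * g * (X + m * u) + k * (X + m * u) ^ 2 := by field_simp; ring
  -- `d - 2 - (d - 1) / 2 ≥ 0` because `3 ≤ d`
  have hcoef : 0 ≤ m * k * u ^ 2 * (d - k * r ^ 2 / t - m) := by
    have : 0 ≤ (d : ℝ) - k * r ^ 2 / t - m := by rw [hm]; linarith
    have : 0 ≤ m := by rw [hm]; linarith
    positivity
  have hexp : m * ((d * k - k ^ 2 * r ^ 2 / t) * u ^ 2 + 2 * k * u * X) =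
      m * k * u ^ 2 * (d - k * r ^ 2 / t - m) + m ^ 2 * k * u ^ 2 + 2 * m * k * u * X := by
    field_simp; ring
  rw [hexp]
  have hX := mul_le_mul_of_nonneg_left hr hkpos.le
  have hX' : k * X ^ 2 ≤ k * (r ^ 2 * P) := hX
  nlinarith

/-- Decay inside the cone, with the rate `1 / η`, for a wave supported in the cone `‖x‖ ≤ R + |t|`.
The weight in `dil_lower` is at least `η / 2` on the ball of radius `t - η`, and it is never below
`-3R / 2` on the support of the wave. -/
lemma IsWave.decay_of_support (hd : 3 ≤ d) {U : E d × ℝ → ℝ} (hU : IsWave U) {R : ℝ} (hR : 0 < R)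
    (hsupp : ∀ x t, R + |t| < ‖x‖ → U (x, t) = 0) :
    ∃ C : ℝ, ∀ η t : ℝ, 0 ≤ η → R ≤ t →
      η * ∫ x in ball (0 : E d) (t - η), en U (x, t) ≤ C := by
  have hCS : CS U := fun T => ⟨R + T + 1, fun x t ht hx => hsupp x t (by linarith)⟩
  have hen_CS : CS (en U) := by
    have h : ∀ w : E d × ℝ, CS fun q => D w U q ^ 2 := fun w => by
      simp only [pow_two]; exact (hCS.D w).mul_left
    exact (CS.sum _ fun i => h (e i)).add (h τ)
  have hint := hen_CS.integrable hU.contDiff_en.continuous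
  have hdil_CS : CS (dil U) := (hen_CS.mul_left.mul_left).add (hCS.D τ).mul_right
  have hdil : ContDiff ℝ 1 (dil U) := by
    unfold dil
    exact (contDiff_snd.mul (contDiff_const.mul hU.contDiff_en)).add
      ((hU.contDiff_D τ).mul hU.contDiff_mult)
  have hmono : Antitone fun t => ∫ x, dil U (x, t) :=
    antitone_integral hdil_CS hdil
      (fun i => (((hCS.D _).mul_left.mul_left).add (hCS.D _).mul_right).add
        (((show CS fun q => D τ U q ^ 2 by
          simp only [pow_two]; exact (hCS.D τ).mul_left).add hen_CS.mul_left).mul_left))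
      (fun i => by
        exact ((contDiff_snd.mul ((hU.contDiff_D τ).mul (hU.contDiff_D _))).add
          ((hU.contDiff_D _).mul hU.contDiff_mult)).add ((contDiff_coord i).mul
            (((hU.contDiff_D τ).pow 2).add (contDiff_const.mul hU.contDiff_en))))
      fun q => (hU.dil_conservation q).le
  refine ⟨4 * (∫ x, dil U (x, 0)) + 3 * R * ∫ x, en U (x, 0), fun η t hη ht => ?_⟩
  have ht0 : 0 < t := hR.trans_le ht
  have hen0 : ∀ x, R + t < ‖x‖ → en U (x, t) = 0 := by
    intro x hx
    have hz : ∀ w : E d × ℝ, D w U (x, t) = 0 := by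
      intro w
      have : U =ᶠ[𝓝 (x, t)] fun _ => 0 := by
        have h1 : Continuous fun q : E d × ℝ => ‖q.1‖ - |q.2| :=
          continuous_fst.norm.sub continuous_snd.abs
        have h2 : ∀ᶠ q : E d × ℝ in 𝓝 (x, t), R < ‖q.1‖ - |q.2| :=
          (h1.tendsto (x, t)).eventually (lt_mem_nhds (by
            simp only [abs_of_pos ht0]; linarith))
        filter_upwards [h2] with q hq
        exact hsupp q.1 q.2 (by linarith)
      simp [D, this.fderiv_eq]
    simp [en, hz]
  -- the divergence of `wt · x U²` integrates to zero, so it may be added to `dil`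
  have hFc : ∀ i : Fin d, ContDiff ℝ 1 fun q : E d × ℝ => wt t q * (q.1 i * U q ^ 2) := fun i =>
    (contDiff_wt ht0).mul ((contDiff_coord i).mul ((hU.smooth.of_le (by norm_num)).pow 2))
  have hFs : ∀ i : Fin d, CS fun q : E d × ℝ => wt t q * (q.1 i * U q ^ 2) := fun i => by
    simp only [pow_two]; exact hCS.mul_left.mul_left.mul_left
  have hFi : ∀ i : Fin d, Integrable fun x =>
      D (e i) (fun q : E d × ℝ => wt t q * (q.1 i * U q ^ 2)) (x, t) := fun i =>
    ((hFs i).D _).integrable (continuous_D (hFc i) _) t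
  have hZ : ∫ x, ∑ i, D (e i) (fun q : E d × ℝ => wt t q * (q.1 i * U q ^ 2)) (x, t) = 0 := by
    rw [integral_finsetSum _ fun i _ => hFi i]
    exact Finset.sum_eq_zero fun i _ => integral_D_e (hFs i) (hFc i) i t
  have hdil_int := hdil_CS.integrable hdil.continuous t
  have hB : Integrable ((ball (0 : E d) (t - η)).indicator fun x => en U (x, t)) :=
    (integrable_indicator_iff measurableSet_ball).2 (hint t).integrableOn
  have hmain : ∫ x, (η / 2 * (ball (0 : E d) (t - η)).indicator (fun x => en U (x, t)) x -
      3 * R / 2 * en U (x, t)) ≤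
      ∫ x, (2 * dil U (x, t) + ((d : ℝ) - 1) / 2 *
        ∑ i, D (e i) (fun q : E d × ℝ => wt t q * (q.1 i * U q ^ 2)) (x, t)) := by
    refine integral_mono ((hB.const_mul _).sub ((hint t).const_mul _))
      ((hdil_int.const_mul 2).add ((integrable_finsetSum _ fun i _ => hFi i).const_mul _))
      fun x => ?_
    simp only [hU.D_wt_flux ht0]
    refine le_trans ?_ (dil_lower hd U ht0)
    rcases lt_or_ge (R + t) ‖x‖ with hx | hx
    · have h0 := hen0 x hx
      have h1 : (ball (0 : E d) (t - η)).indicator (fun x => en U (x, t)) x = 0 := by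
        by_cases h : x ∈ ball (0 : E d) (t - η) <;> simp [h, h0]
      rw [h1, h0]
      unfold en at h0
      have hP : 0 ≤ ∑ i, D (e i) U (x, t) ^ 2 := by positivity
      have hP0 : ∑ i, D (e i) U (x, t) ^ 2 = 0 := by nlinarith [sq_nonneg (D τ U (x, t))]
      have hg0 : D τ U (x, t) ^ 2 = 0 := by nlinarith [sq_nonneg (D τ U (x, t))]
      rw [hP0, hg0]
      simp
    · have key : ∀ c : ℝ, c ≤ (t ^ 2 - ‖x‖ ^ 2) / (2 * t) →
          c ≤ t * (t ^ 2 - ‖x‖ ^ 2) / (t ^ 2 + ‖x‖ ^ 2) → c * en U (x, t) ≤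
          (t ^ 2 - ‖x‖ ^ 2) / (2 * t) * D τ U (x, t) ^ 2 +
          t * (t ^ 2 - ‖x‖ ^ 2) / (t ^ 2 + ‖x‖ ^ 2) * ∑ i, D (e i) U (x, t) ^ 2 := by
        intro c h1 h2
        have hP : 0 ≤ ∑ i, D (e i) U (x, t) ^ 2 := by positivity
        have := mul_le_mul_of_nonneg_right h1 (sq_nonneg (D τ U (x, t)))
        have := mul_le_mul_of_nonneg_right h2 hP
        unfold en
        linarith
      have hx0 := norm_nonneg x
      by_cases h : x ∈ ball (0 : E d) (t - η)
      · have hxb : ‖x‖ < t - η := by simpa using h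
        simp only [h, Set.indicator_of_mem]
        have hRen := mul_nonneg hR.le (en_nonneg U (x, t))
        have := key (η / 2) (by
          rw [le_div_iff₀ (by positivity)]
          nlinarith) (by
          rw [le_div_iff₀ (by positivity)]
          have h1 : η * (t ^ 2 + ‖x‖ ^ 2) ≤ (t - ‖x‖) * (t ^ 2 + ‖x‖ ^ 2) :=
            mul_le_mul_of_nonneg_right (by linarith) (by positivity)
          have h2 : 0 ≤ (t - ‖x‖) * (t ^ 2 + ‖x‖ ^ 2) :=
            mul_nonneg (by linarith) (by positivity)
          have h3 : 0 ≤ (t - ‖x‖) * (‖x‖ * (t - ‖x‖)) :=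
            mul_nonneg (by linarith) (mul_nonneg hx0 (by linarith))
          nlinarith)
        linarith
      · simp only [h, not_false_eq_true, Set.indicator_of_notMem]
        have := key (-(3 * R / 2)) (by
          rw [le_div_iff₀ (by positivity)]
          nlinarith) (by
          rw [le_div_iff₀ (by positivity)]
          rcases le_total ‖x‖ t with hxt | hxt
          · have : 0 ≤ t * (t ^ 2 - ‖x‖ ^ 2) := mul_nonneg ht0.le (by nlinarith)
            have : 0 ≤ R * (t ^ 2 + ‖x‖ ^ 2) := by positivity
            linarith
          · have h1 : 0 ≤ (R + t - ‖x‖) * (t * (t + ‖x‖)) :=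
              mul_nonneg (by linarith) (by positivity)
            have h2 : 0 ≤ R * (‖x‖ * (‖x‖ - t)) :=
              mul_nonneg hR.le (mul_nonneg hx0 (by linarith))
            have : 0 ≤ R * (t ^ 2 + ‖x‖ ^ 2) := by positivity
            nlinarith)
        linarith
  rw [integral_sub (hB.const_mul _) ((hint t).const_mul _), integral_const_mul, integral_const_mul,
    integral_indicator measurableSet_ball, integral_add (hdil_int.const_mul 2)
      ((integrable_finsetSum _ fun i _ => hFi i).const_mul _), integral_const_mul,
    integral_const_mul, hZ, hU.energy_eq (hint 0) t] at hmain
  have := hmono ht0.le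
  simp only at this
  linarith

/-! ### Waves with smooth compactly supported data, by Fourier transform -/

/-- The inner product as a real bilinear map. -/
def innerL (d : ℕ) : E d →L[ℝ] E d →L[ℝ] ℝ := innerSL ℝ

/-- Minus the Euclidean pairing of space-time with its dual, so that
`VectorFourier.fourierIntegral` is the inverse Fourier transform on space-time. -/
def pair (d : ℕ) : (E d × ℝ) →L[ℝ] (E d × ℝ) →L[ℝ] ℝ :=
  -((innerL d).bilinearComp (ContinuousLinearMap.fst ℝ (E d) ℝ)
      (ContinuousLinearMap.fst ℝ (E d) ℝ) +
    (ContinuousLinearMap.mul ℝ ℝ).bilinearComp (ContinuousLinearMap.snd ℝ (E d) ℝ)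
      (ContinuousLinearMap.snd ℝ (E d) ℝ))

lemma pair_apply (v w : E d × ℝ) : pair d v w = -(inner ℝ v.1 w.1 + v.2 * w.2) := by
  simp [pair, innerL]
  rfl

/-- The real part of the inverse space-time Fourier transform of `f` with respect to the
measure `μ`. -/
def wav (μ : Measure (E d × ℝ)) (f : E d × ℝ → ℂ) (q : E d × ℝ) : ℝ :=
  (VectorFourier.fourierIntegral 𝐞 μ (pair d).toLinearMap₁₂ f q).re

/-- The Fourier multiplier of the derivative along `w`. -/
def mulD (w : E d × ℝ) (f : E d × ℝ → ℂ) (v : E d × ℝ) : ℂ :=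
  -(2 * Real.pi * Complex.I) * ((pair d v w : ℝ) * f v)

lemma D_wav {μ : Measure (E d × ℝ)} {f : E d × ℝ → ℂ} (hf : Integrable f μ)
    (hf' : Integrable (fun v => ‖v‖ * ‖f v‖) μ) (w : E d × ℝ) :
    D w (wav μ f) = wav μ (mulD w f) := by
  funext q
  have h1 := VectorFourier.hasFDerivAt_fourierIntegral (pair d) hf hf' q
  have h2 := (Complex.reCLM.hasFDerivAt (x := VectorFourier.fourierIntegral 𝐞 μ
    (pair d).toLinearMap₁₂ f q)).comp q h1
  have h3 : HasFDerivAt (wav μ f) _ q := h2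
  unfold D
  rw [h3.fderiv]
  simp only [ContinuousLinearMap.comp_apply, Complex.reCLM_apply, wav]
  congr 1
  unfold VectorFourier.fourierIntegral
  have hint : Integrable (fun v => 𝐞 (-(pair d).toLinearMap₁₂ v q) •
      VectorFourier.fourierSMulRight (pair d) f v) μ := by
    refine (VectorFourier.fourierIntegral_convergent_iff Real.continuous_fourierChar
      (by apply (pair d).continuous₂ : Continuous (fun p : (E d × ℝ) × (E d × ℝ) =>
        (pair d).toLinearMap₁₂ p.1 p.2)) q).2 ?_
    refine (hf'.const_mul (2 * Real.pi * ‖pair d‖)).mono' hf.1.fourierSMulRight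
      (Eventually.of_forall fun v => ?_)
    refine (VectorFourier.norm_fourierSMulRight_le (pair d) f v).trans (le_of_eq ?_)
    ring
  rw [ContinuousLinearMap.integral_apply hint]
  congr 1

lemma integrable_mulD {μ : Measure (E d × ℝ)} {f : E d × ℝ → ℂ} (n : ℕ) (hf : Integrable f μ)
    (hf' : Integrable (fun v => ‖v‖ ^ (n + 1) * ‖f v‖) μ) (w : E d × ℝ) :
    Integrable (fun v => ‖v‖ ^ n * ‖mulD w f v‖) μ := by
  have hm : AEStronglyMeasurable (mulD w f) μ := by
    unfold mulD
    refine (AEStronglyMeasurable.mul ?_ hf.1).const_mul _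
    exact (by fun_prop : Continuous fun v => ((pair d v w : ℝ) : ℂ)).aestronglyMeasurable
  refine (hf'.const_mul (2 * Real.pi * ‖pair d‖ * ‖w‖)).mono'
    ((continuous_norm.pow n).aestronglyMeasurable.mul hm.norm) (Eventually.of_forall fun v => ?_)
  have h := (pair d).le_opNorm₂ v w
  have h2 : ‖mulD w f v‖ = 2 * Real.pi * (‖pair d v w‖ * ‖f v‖) := by
    simp [mulD, abs_of_pos Real.pi_pos]
  rw [Real.norm_of_nonneg (by positivity), h2]
  calc ‖v‖ ^ n * (2 * Real.pi * (‖pair d v w‖ * ‖f v‖))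
      ≤ ‖v‖ ^ n * (2 * Real.pi * (‖pair d‖ * ‖v‖ * ‖w‖ * ‖f v‖)) := by gcongr
    _ = _ := by ring

lemma integrable_mulD_zero {μ : Measure (E d × ℝ)} {f : E d × ℝ → ℂ} (hf : Integrable f μ)
    (hf' : Integrable (fun v => ‖v‖ * ‖f v‖) μ) (w : E d × ℝ) : Integrable (mulD w f) μ := by
  have hm : AEStronglyMeasurable (mulD w f) μ := by
    unfold mulD
    refine (AEStronglyMeasurable.mul ?_ hf.1).const_mul _
    exact (by fun_prop : Continuous fun v => ((pair d v w : ℝ) : ℂ)).aestronglyMeasurable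
  rw [← integrable_norm_iff hm]
  simpa using integrable_mulD 0 hf (by simpa using hf') w

lemma wav_sum {μ : Measure (E d × ℝ)} {f : Fin d → E d × ℝ → ℂ} (hf : ∀ i, Integrable (f i) μ)
    (q : E d × ℝ) : ∑ i, wav μ (f i) q = wav μ (fun v => ∑ i, f i v) q := by
  unfold wav VectorFourier.fourierIntegral
  rw [← Complex.re_sum, ← integral_finsetSum]
  · simp only [Finset.smul_sum]
  · intro i _
    exact (VectorFourier.fourierIntegral_convergent_iff Real.continuous_fourierChar
      (by apply (pair d).continuous₂ : Continuous (fun p : (E d × ℝ) × (E d × ℝ) =>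
        (pair d).toLinearMap₁₂ p.1 p.2)) q).2 (hf i)

/-- The inverse Fourier transform of a measure carried by the light cone solves the wave
equation. -/
lemma isWave_wav {μ : Measure (E d × ℝ)} {f : E d × ℝ → ℂ}
    (hμ : ∀ᵐ v : E d × ℝ ∂μ, v.2 ^ 2 = ‖v.1‖ ^ 2) (h0 : Integrable f μ)
    (h1 : Integrable (fun v => ‖v‖ * ‖f v‖) μ)
    (h2 : Integrable (fun v => ‖v‖ ^ 2 * ‖f v‖) μ) : IsWave (wav μ f) where
  smooth := by
    refine Complex.reCLM.contDiff.comp (VectorFourier.contDiff_fourierIntegral (N := 2) _ ?_)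
    intro n hn
    have hn' : n ≤ 2 := by exact_mod_cast hn
    interval_cases n
    · simpa using h0.norm
    · simpa using h1
    · exact h2
  pde q := by
    have hD : ∀ w : E d × ℝ, D w (D w (wav μ f)) = wav μ (mulD w (mulD w f)) := fun w => by
      rw [D_wav h0 h1, D_wav (integrable_mulD_zero h0 h1 w)
        (by simpa using integrable_mulD 1 h0 (by simpa using h2) w)]
    have hI : ∀ w : E d × ℝ, Integrable (mulD w (mulD w f)) μ := fun w =>
      integrable_mulD_zero (integrable_mulD_zero h0 h1 w)
        (by simpa using integrable_mulD 1 h0 (by simpa using h2) w) w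
    simp only [hD]
    rw [wav_sum fun i => hI (e i)]
    unfold wav
    rw [VectorFourier.fourierIntegral_congr_ae]
    filter_upwards [hμ] with v hv
    have hs : ∑ i : Fin d, (v.1 i) ^ 2 = v.2 ^ 2 := by
      rw [hv, EuclideanSpace.real_norm_sq_eq]
    have : ∀ i : Fin d, mulD (e i) (mulD (e i) f) v =
        (2 * Real.pi * Complex.I) ^ 2 * f v * (((v.1 i) ^ 2 : ℝ) : ℂ) := fun i => by
      simp only [mulD, pair_apply, e, EuclideanSpace.inner_single_right]
      push_cast
      simp
      ring
    rw [Finset.sum_congr rfl fun i _ => this i, ← Finset.mul_sum, ← Complex.ofReal_sum, hs]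
    simp [mulD, pair_apply, τ]
    ring

/-- The parametrization of the half-cone of slope `σ` in frequency space. -/
def toCone (σ : ℝ) (ξ : E d) : E d × ℝ := (ξ, σ * ‖ξ‖)

lemma continuous_toCone (σ : ℝ) : Continuous (toCone σ : E d → E d × ℝ) := by
  unfold toCone; fun_prop

lemma measurableEmbedding_toCone (σ : ℝ) : MeasurableEmbedding (toCone σ : E d → E d × ℝ) :=
  (Function.LeftInverse.isClosedEmbedding (f := Prod.fst) (g := toCone σ) (fun _ => rfl)
    continuous_fst (continuous_toCone σ)).measurableEmbedding

/-- The wave with frequencies on the half-cone of slope `σ` and amplitude `a`. -/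
def halfWave (σ : ℝ) (a : E d → ℂ) : E d × ℝ → ℝ :=
  wav (Measure.map (toCone σ) volume) (fun v => a v.1)

lemma integrable_cone_iff (σ : ℝ) (h : E d × ℝ → ℝ) :
    Integrable h (Measure.map (toCone σ) volume) ↔ Integrable fun ξ => h (toCone σ ξ) :=
  (measurableEmbedding_toCone σ).integrable_map_iff

lemma norm_toCone {σ : ℝ} (hσ : |σ| = 1) (ξ : E d) : ‖toCone σ ξ‖ = ‖ξ‖ := by
  simp [toCone, Prod.norm_def, hσ]

lemma integrable_halfWave {σ : ℝ} (hσ : |σ| = 1) {a : E d → ℂ}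
    (ha : ∀ n : ℕ, n ≤ 2 → Integrable fun ξ => ‖ξ‖ ^ n * ‖a ξ‖) {n : ℕ} (hn : n ≤ 2) :
    Integrable (fun v : E d × ℝ => ‖v‖ ^ n * ‖a v.1‖) (Measure.map (toCone σ) volume) := by
  rw [integrable_cone_iff]
  simp only [norm_toCone hσ]
  exact ha n hn

lemma integrable_halfWave_zero {σ : ℝ} {a : E d → ℂ} (ha : Integrable a) :
    Integrable (fun v : E d × ℝ => a v.1) (Measure.map (toCone σ) volume) :=
  (measurableEmbedding_toCone σ).integrable_map_iff.2 ha

lemma isWave_halfWave {σ : ℝ} (hσ : |σ| = 1) {a : E d → ℂ} (ha0 : Integrable a)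
    (ha : ∀ n : ℕ, n ≤ 2 → Integrable fun ξ => ‖ξ‖ ^ n * ‖a ξ‖) : IsWave (halfWave σ a) := by
  refine isWave_wav ?_ (integrable_halfWave_zero ha0)
    (by simpa using integrable_halfWave hσ ha one_le_two) (integrable_halfWave hσ ha le_rfl)
  rw [(measurableEmbedding_toCone σ).ae_map_iff]
  refine Eventually.of_forall fun ξ => ?_
  have : σ ^ 2 = 1 := by rw [← sq_abs, hσ, one_pow]
  simp [toCone, mul_pow, this]

lemma wav_cone (σ : ℝ) (f : E d × ℝ → ℂ) (x : E d) :
    wav (Measure.map (toCone σ) volume) f (x, 0) =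
      (∫ ξ, 𝐞 (inner ℝ ξ x) • f (toCone σ ξ)).re := by
  unfold wav VectorFourier.fourierIntegral
  rw [(measurableEmbedding_toCone σ).integral_map]
  simp [pair_apply, toCone]

lemma integrable_char_smul {a : E d → ℂ} (ha : Integrable a) (x : E d) :
    Integrable fun ξ => 𝐞 (inner ℝ ξ x) • a ξ := by
  refine ha.norm.mono' ?_ (Eventually.of_forall fun ξ => by simp [Circle.norm_smul])
  refine AEStronglyMeasurable.fun_smul ?_ ha.1
  exact (Real.continuous_fourierChar.comp (by fun_prop)).aestronglyMeasurable

/-- The singularity `‖ξ‖⁻¹` is integrable at the origin in dimension at least two. -/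
lemma integrable_inv_norm_mul (hd : 3 ≤ d) (g : 𝓢(E d, ℂ)) :
    Integrable fun ξ => ‖ξ‖⁻¹ * ‖g ξ‖ := by
  have : Nontrivial (E d) := by
    have : Nonempty (Fin d) := ⟨⟨0, by omega⟩⟩
    infer_instance
  have h1 : IntegrableOn (fun ξ : E d => ‖ξ‖⁻¹) (ball 0 1) := by
    rw [integrableOn_fun_norm_addHaar volume (f := fun y : ℝ => y⁻¹)]
    rw [finrank_euclideanSpace_fin]
    have : IntegrableOn (fun y : ℝ => y ^ (d - 2)) (Set.Ioo 0 1) :=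
      ((continuous_pow (d - 2)).integrableOn_Icc (a := 0) (b := 1)).mono_set Set.Ioo_subset_Icc_self
    refine this.congr_fun (fun y hy => ?_) measurableSet_Ioo
    have hd2 : d - 1 = (d - 2) + 1 := by omega
    have hy0 : y ≠ 0 := hy.1.ne'
    simp only [hd2, pow_succ, smul_eq_mul]
    field_simp
  obtain ⟨C, hC⟩ : ∃ C : ℝ, ∀ ξ, ‖g ξ‖ ≤ C := by
    obtain ⟨C, -, hC⟩ := g.decay 0 0
    exact ⟨C, fun ξ => by simpa using hC ξ⟩
  have h2 := ((integrable_indicator_iff measurableSet_ball).2 h1).const_mul C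
  refine (h2.add g.integrable.norm).mono' ?_ (Eventually.of_forall fun ξ => ?_)
  · exact (measurable_norm.inv.aestronglyMeasurable).mul g.continuous.norm.aestronglyMeasurable
  · rw [Real.norm_of_nonneg (by positivity)]
    simp only [Pi.add_apply]
    by_cases h : ξ ∈ ball (0 : E d) 1
    · simp only [h, Set.indicator_of_mem]
      have := mul_le_mul_of_nonneg_left (hC ξ) (inv_nonneg.2 (norm_nonneg ξ))
      have := norm_nonneg (g ξ)
      linarith
    · simp only [h, not_false_eq_true, Set.indicator_of_notMem]
      have h1 : 1 ≤ ‖ξ‖ := by simpa using h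
      have := mul_le_mul_of_nonneg_right (inv_le_one_of_one_le₀ h1) (norm_nonneg (g ξ))
      linarith

/-- Existence of waves with smooth compactly supported data `f` and `g`. With `A` and `B` the Fourier
transforms of `f` and `g`, and `b = B / (2πi‖ξ‖)`, the solution is carried by the two half-cones of
slopes `1` and `-1`, with amplitudes `(A + b) / 2` and `(A - b) / 2`. -/
lemma exists_wave (hd : 3 ≤ d) {f g : E d → ℝ} (hf : ContDiff ℝ ∞ f) (hfs : HasCompactSupport f)
    (hg : ContDiff ℝ ∞ g) (hgs : HasCompactSupport g) :
    ∃ U : E d × ℝ → ℝ, IsWave U ∧ (∀ x, U (x, 0) = f x) ∧ ∀ x, D τ U (x, 0) = g x := by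
  have hcast : ∀ {f : E d → ℝ}, ContDiff ℝ ∞ f → ContDiff ℝ ∞ fun x => (f x : ℂ) := fun h =>
    Complex.ofRealCLM.contDiff.comp h
  have hcasts : ∀ {f : E d → ℝ}, HasCompactSupport f → HasCompactSupport fun x => (f x : ℂ) :=
    fun h => h.comp_left (g := fun r : ℝ => (r : ℂ)) (by simp)
  set F : 𝓢(E d, ℂ) := (hcasts hfs).toSchwartzMap (hcast hf) with hF
  set G : 𝓢(E d, ℂ) := (hcasts hgs).toSchwartzMap (hcast hg) with hG
  set A : 𝓢(E d, ℂ) := 𝓕 F with hA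
  set B : 𝓢(E d, ℂ) := 𝓕 G with hB
  -- division by the time frequency; the value at `ξ = 0` is irrelevant
  set b : E d → ℂ := fun ξ => ((‖ξ‖⁻¹ : ℝ) : ℂ) * B ξ / (2 * Real.pi * Complex.I) with hb
  have hbm : AEStronglyMeasurable b := by
    have h1 : Measurable fun ξ : E d => ((‖ξ‖⁻¹ : ℝ) : ℂ) :=
      Complex.measurable_ofReal.comp measurable_norm.inv
    have h2 : Measurable fun ξ => B ξ := B.continuous.measurable
    exact ((h1.mul h2).div_const _).aestronglyMeasurable
  have hbn : ∀ ξ, ‖b ξ‖ = (2 * Real.pi)⁻¹ * (‖ξ‖⁻¹ * ‖B ξ‖) := fun ξ => by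
    simp [hb, abs_of_pos Real.pi_pos]
    ring
  have hbi : ∀ n : ℕ, n ≤ 2 → Integrable fun ξ => ‖ξ‖ ^ n * ‖b ξ‖ := by
    intro n hn
    simp only [hbn]
    rcases Nat.eq_zero_or_pos n with rfl | hn0
    · simpa using (integrable_inv_norm_mul hd B).const_mul _
    · obtain ⟨m, rfl⟩ : ∃ m, n = m + 1 := ⟨n - 1, by omega⟩
      refine ((B.integrable_pow_mul volume m).const_mul (2 * Real.pi)⁻¹).mono' ?_
        (Eventually.of_forall fun ξ => ?_)
      · exact (by fun_prop : Measurable fun ξ : E d => ‖ξ‖ ^ (m + 1)).aestronglyMeasurable.mul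
          (((measurable_norm.inv).aestronglyMeasurable.mul
            B.continuous.norm.aestronglyMeasurable).const_mul _)
      · rw [Real.norm_of_nonneg (by positivity)]
        have h1 : ‖ξ‖ * ‖ξ‖⁻¹ ≤ 1 := mul_inv_le_one
        calc ‖ξ‖ ^ (m + 1) * ((2 * Real.pi)⁻¹ * (‖ξ‖⁻¹ * ‖B ξ‖))
            = (‖ξ‖ * ‖ξ‖⁻¹) * ((2 * Real.pi)⁻¹ * (‖ξ‖ ^ m * ‖B ξ‖)) := by ring
          _ ≤ 1 * ((2 * Real.pi)⁻¹ * (‖ξ‖ ^ m * ‖B ξ‖)) := by gcongr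
          _ = _ := one_mul _
  have hb0 : Integrable b := by
    rw [← integrable_norm_iff hbm]
    simpa using hbi 0 (by norm_num)
  have hamp : ∀ c : ℂ, Integrable (fun ξ => c * A ξ + 1 / 2 * b ξ) ∧
      ∀ n : ℕ, n ≤ 2 → Integrable fun ξ => ‖ξ‖ ^ n * ‖c * A ξ + 1 / 2 * b ξ‖ := by
    intro c
    have h0 : Integrable (fun ξ => c * A ξ + 1 / 2 * b ξ) :=
      (A.integrable.const_mul c).add (hb0.const_mul _)
    refine ⟨h0, fun n hn => ?_⟩
    refine (((A.integrable_pow_mul volume n).const_mul ‖c‖).add (hbi n hn)).mono'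
      ((continuous_norm.pow n).aestronglyMeasurable.mul h0.1.norm) (Eventually.of_forall fun ξ => ?_)
    rw [Real.norm_of_nonneg (by positivity)]
    have h1 : ‖c * A ξ + 1 / 2 * b ξ‖ ≤ ‖c‖ * ‖A ξ‖ + ‖b ξ‖ := by
      refine (norm_add_le _ _).trans ?_
      rw [norm_mul, norm_mul]
      have := norm_nonneg (b ξ)
      norm_num
      linarith
    calc ‖ξ‖ ^ n * ‖c * A ξ + 1 / 2 * b ξ‖ ≤ ‖ξ‖ ^ n * (‖c‖ * ‖A ξ‖ + ‖b ξ‖) := by gcongr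
      _ = _ := by simp only [Pi.add_apply]; ring
  have inv : ∀ (H : 𝓢(E d, ℂ)) (x : E d), ∫ ξ, 𝐞 (inner ℝ ξ x) • (𝓕 H : 𝓢(E d, ℂ)) ξ = H x := by
    intro H x
    have h := congrArg (fun K : 𝓢(E d, ℂ) => K x) (FourierTransform.fourierInv_fourier_eq (F := 𝓢(E d, ℂ)) H)
    rw [SchwartzMap.fourierInv_coe, Real.fourierInv_eq] at h
    exact h
  obtain ⟨hp0, hp⟩ := hamp (1 / 2)
  obtain ⟨hm0, hm⟩ := hamp (-1 / 2)
  have hs1 : |(1 : ℝ)| = 1 := abs_one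
  have hs2 : |(-1 : ℝ)| = 1 := by simp
  have hW1 := isWave_halfWave hs1 hp0 hp
  have hW2 := isWave_halfWave hs2 hm0 hm
  -- the second half-wave has amplitude `(-A + b) / 2`, hence the difference
  refine ⟨_, hW1.sub hW2, fun x => ?_, fun x => ?_⟩
  · simp only [halfWave, wav_cone, toCone]
    rw [← Complex.sub_re, ← integral_sub (integrable_char_smul hp0 x) (integrable_char_smul hm0 x)]
    simp only [← smul_sub]
    have : ∀ ξ, (1 / 2 * A ξ + 1 / 2 * b ξ) - (-1 / 2 * A ξ + 1 / 2 * b ξ) = A ξ := fun ξ => by ring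
    simp only [this]
    rw [inv F x]
    simp [hF]
  · rw [D_sub hW1.differentiable hW2.differentiable]
    unfold halfWave
    have hq : ∀ {σ : ℝ} {a : E d → ℂ}, |σ| = 1 → Integrable a →
        (∀ n : ℕ, n ≤ 2 → Integrable fun ξ => ‖ξ‖ ^ n * ‖a ξ‖) →
        D τ (wav (Measure.map (toCone σ) volume) fun v => a v.1) (x, 0) =
        (∫ ξ, 𝐞 (inner ℝ ξ x) • mulD τ (fun v => a v.1) (toCone σ ξ)).re ∧
        Integrable fun ξ => 𝐞 (inner ℝ ξ x) • mulD τ (fun v => a v.1) (toCone σ ξ) := by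
      intro σ a hσ h0 h
      have h1 : Integrable (fun v : E d × ℝ => ‖v‖ * ‖a v.1‖) (Measure.map (toCone σ) volume) := by
        simpa using integrable_halfWave hσ h one_le_two
      refine ⟨?_, ?_⟩
      · rw [D_wav (integrable_halfWave_zero h0) h1, wav_cone]
      · exact integrable_char_smul ((measurableEmbedding_toCone σ).integrable_map_iff.1
          (integrable_mulD_zero (integrable_halfWave_zero h0) h1 τ)) x
    obtain ⟨hq1, hq2⟩ := hq hs1 hp0 hp
    obtain ⟨hq3, hq4⟩ := hq hs2 hm0 hm
    rw [hq1, hq3, ← Complex.sub_re, ← integral_sub hq2 hq4]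
    have hae : ∀ᵐ ξ : E d, ξ ≠ 0 := by
      have : Nonempty (Fin d) := ⟨⟨0, by omega⟩⟩
      exact Measure.ae_ne volume 0
    have : ∫ ξ, (𝐞 (inner ℝ ξ x) • mulD τ (fun v : E d × ℝ => 1 / 2 * A v.1 + 1 / 2 * b v.1)
          (toCone 1 ξ) - 𝐞 (inner ℝ ξ x) •
          mulD τ (fun v : E d × ℝ => -1 / 2 * A v.1 + 1 / 2 * b v.1) (toCone (-1) ξ)) =
        ∫ ξ, 𝐞 (inner ℝ ξ x) • B ξ := by
      refine integral_congr_ae ?_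
      filter_upwards [hae] with ξ hξ
      rw [← smul_sub]
      congr 1
      have h1 : ((‖ξ‖ : ℝ) : ℂ) ≠ 0 := by simpa using hξ
      have h2 : (2 * Real.pi * Complex.I : ℂ) ≠ 0 := Complex.two_pi_I_ne_zero
      have hbB : B ξ = (2 * Real.pi * Complex.I) * (‖ξ‖ : ℝ) * b ξ := by
        simp only [hb]
        push_cast
        field_simp
      simp only [mulD, pair_apply, toCone, τ]
      rw [hbB]
      simp
      ring
    rw [this, inv G x]
    simp [hG]

/-! ### Mollification and truncation -/

/-- The continuous functions `F` and `G` are at squared `L²` distance at most `a`. -/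
def Near {X : Type*} [NormedAddCommGroup X] (a : ℝ) (F G : E d → X) : Prop :=
  Continuous F ∧ Continuous G ∧ Integrable (fun x => ‖F x - G x‖ ^ 2) ∧ ∫ x, ‖F x - G x‖ ^ 2 ≤ a

lemma Near.trans {X : Type*} [NormedAddCommGroup X] {a b c : ℝ} {F G H : E d → X}
    (h1 : Near a F G) (h2 : Near b G H) (hc : 2 * a + 2 * b ≤ c) : Near c F H := by
  obtain ⟨hF, hG, hi, hl⟩ := h1
  obtain ⟨-, hH, hi', hl'⟩ := h2
  have hle : ∀ x, ‖F x - H x‖ ^ 2 ≤ 2 * ‖F x - G x‖ ^ 2 + 2 * ‖G x - H x‖ ^ 2 := fun x => by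
    have := norm_sub_le_norm_sub_add_norm_sub (F x) (G x) (H x)
    nlinarith [norm_nonneg (F x - H x), sq_nonneg (‖F x - G x‖ - ‖G x - H x‖)]
  have hint := (hi.const_mul 2).add (hi'.const_mul 2)
  have hint' : Integrable fun x => ‖F x - H x‖ ^ 2 :=
    hint.mono' ((hF.sub hH).norm.pow 2).aestronglyMeasurable
      (Eventually.of_forall fun x => by
        rw [Real.norm_of_nonneg (by positivity)]; exact hle x)
  refine ⟨hF, hH, hint', (integral_mono hint' hint hle).trans ?_⟩
  have : ∫ x, (((fun x => 2 * ‖F x - G x‖ ^ 2) + fun x => 2 * ‖G x - H x‖ ^ 2 : E d → ℝ)) x =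
      2 * (∫ x, ‖F x - G x‖ ^ 2) + 2 * ∫ x, ‖G x - H x‖ ^ 2 := by
    rw [← integral_const_mul, ← integral_const_mul]
    exact integral_add (hi.const_mul 2) (hi'.const_mul 2)
  rw [this]
  linarith

lemma Near.sq_integrable {X : Type*} [NormedAddCommGroup X] {a : ℝ} {F G : E d → X}
    (h : Near a F G) (hi : Integrable fun x => ‖F x‖ ^ 2) : Integrable fun x => ‖G x‖ ^ 2 := by
  obtain ⟨hF, hG, hi', -⟩ := h
  refine ((hi.const_mul 2).add (hi'.const_mul 2)).mono' (hG.norm.pow 2).aestronglyMeasurable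
    (Eventually.of_forall fun x => ?_)
  rw [Real.norm_of_nonneg (by positivity)]
  have h1 : ‖G x‖ ≤ ‖F x‖ + ‖F x - G x‖ := by
    rw [norm_sub_rev]; exact norm_le_norm_add_norm_sub' _ _
  simp only [Pi.add_apply]
  nlinarith [norm_nonneg (G x), sq_nonneg (‖F x‖ - ‖F x - G x‖)]

/-- Mollification of a continuous compactly supported function, by any sufficiently concentrated bump.
The result is passed as a function `G` so that it can be the gradient of a mollified function. -/
lemma mollify {X : Type*} [NormedAddCommGroup X] [NormedSpace ℝ X]
    [CompleteSpace X] {F : E d → X} (hF : Continuous F) (hFs : HasCompactSupport F) {ε : ℝ} (hε : 0 < ε) :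
    ∃ δ : ℝ, 0 < δ ∧ ∀ φ : ContDiffBump (0 : E d), φ.rOut ≤ δ → ∀ G : E d → X, Continuous G →
      (∀ x, G x = convolution (φ.normed volume) F (ContinuousLinearMap.lsmul ℝ ℝ) volume x) →
      Near ε F G := by
  obtain ⟨ρ, hρ⟩ : ∃ ρ : ℝ, ∀ x, ρ < ‖x‖ → F x = 0 := by
    obtain ⟨ρ, h⟩ := hFs.isCompact.isBounded.subset_closedBall (0 : E d)
    refine ⟨ρ, fun x hx => ?_⟩
    by_contra hne
    have := h (subset_tsupport F (Function.mem_support.2 hne))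
    rw [mem_closedBall, dist_zero_right] at this
    linarith
  set M := volume.real (closedBall (0 : E d) (ρ + 1)) with hM
  have hM0 : 0 ≤ M := measureReal_nonneg
  set η := min 1 (ε / (M + 1)) with hη
  have hη0 : 0 < η := by positivity
  obtain ⟨δ, hδ, hδF⟩ := Metric.uniformContinuous_iff.1
    (hFs.uniformContinuous_of_continuous hF) η hη0
  refine ⟨min δ 1, by positivity, fun φ hφ G hG hGF => ?_⟩
  have hφ1 := hφ.trans (min_le_left _ _)
  have hφ2 := hφ.trans (min_le_right _ _)
  have hle : ∀ x, ‖F x - G x‖ ≤ η := fun x => by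
    rw [← dist_eq_norm, dist_comm, hGF x]
    refine φ.dist_normed_convolution_le hF.aestronglyMeasurable fun y hy => ?_
    exact (hδF (lt_of_lt_of_le hy hφ1)).le
  have hz : ∀ x, x ∉ closedBall (0 : E d) (ρ + 1) → ‖F x - G x‖ = 0 := fun x hx => by
    have hx' : ρ + 1 < ‖x‖ := by simpa using hx
    have h0 : F x = 0 := hρ x (by linarith)
    have : dist (G x) (F x) ≤ 0 := by
      rw [hGF x]
      refine φ.dist_normed_convolution_le hF.aestronglyMeasurable fun y hy => ?_
      have hy' : dist y x < 1 := lt_of_lt_of_le hy hφ2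
      have hy2 : ρ < ‖y‖ := by
        have := norm_le_norm_add_norm_sub' x y
        rw [dist_eq_norm, norm_sub_rev] at hy'
        linarith
      rw [h0, hρ y hy2, dist_self]
    rw [← dist_eq_norm, dist_comm]
    exact le_antisymm this dist_nonneg
  have hb : ∀ x, ‖F x - G x‖ ^ 2 ≤ (closedBall (0 : E d) (ρ + 1)).indicator (fun _ => η ^ 2) x :=
    fun x => by
    by_cases hx : x ∈ closedBall (0 : E d) (ρ + 1)
    · simp only [hx, Set.indicator_of_mem]
      exact pow_le_pow_left₀ (norm_nonneg _) (hle x) 2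
    · simp [hx, hz x hx]
  have hbi : Integrable ((closedBall (0 : E d) (ρ + 1)).indicator fun _ => η ^ 2) :=
    (integrable_indicator_iff measurableSet_closedBall).2
      (integrableOn_const measure_closedBall_lt_top.ne)
  have hint : Integrable fun x => ‖F x - G x‖ ^ 2 :=
    hbi.mono' ((hF.sub hG).norm.pow 2).aestronglyMeasurable
      (Eventually.of_forall fun x => by rw [Real.norm_of_nonneg (by positivity)]; exact hb x)
  refine ⟨hF, hG, hint, (integral_mono hint hbi hb).trans ?_⟩
  rw [integral_indicator measurableSet_closedBall, setIntegral_const, smul_eq_mul, ← hM]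
  have h1 : η ≤ 1 := min_le_left _ _
  have h2 : η * (M + 1) ≤ ε := by
    rw [← le_div_iff₀ (by positivity)]; exact min_le_right _ _
  have h3 : η ^ 2 ≤ η := by nlinarith
  nlinarith

lemma exists_bump {δ : ℝ} (hδ : 0 < δ) : ∃ φ : ContDiffBump (0 : E d), φ.rOut ≤ δ :=
  ⟨⟨δ / 2, δ, by positivity, by linarith⟩, le_rfl⟩

/-- Smoothing a compactly supported `C¹` function, in the Dirichlet norm. -/
lemma smooth_grad {f : E d → ℝ} (hf : ContDiff ℝ 1 f) (hfs : HasCompactSupport f) {ε : ℝ}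
    (hε : 0 < ε) : ∃ g : E d → ℝ, ContDiff ℝ ∞ g ∧ HasCompactSupport g ∧
      Near ε (fderiv ℝ f) (fderiv ℝ g) := by
  have hc : Continuous (fderiv ℝ f) := hf.continuous_fderiv one_ne_zero
  obtain ⟨δ, hδ, h⟩ := mollify hc (hfs.fderiv ℝ) hε
  obtain ⟨φ, hφ⟩ := exists_bump (d := d) hδ
  have hli := hf.continuous.locallyIntegrable (μ := (volume : Measure (E d)))
  have hs := φ.hasCompactSupport_normed (μ := (volume : Measure (E d)))
  have hg : ContDiff ℝ ∞
      (convolution (φ.normed volume) f (ContinuousLinearMap.lsmul ℝ ℝ) volume) :=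
    hs.contDiff_convolution_left _ φ.contDiff_normed hli
  refine ⟨_, hg, hs.convolution _ hfs, h φ hφ _ (hg.continuous_fderiv (by simp)) fun x => ?_⟩
  rw [(hfs.hasFDerivAt_convolution_right (ContinuousLinearMap.lsmul ℝ ℝ)
    (φ.contDiff_normed (n := 0)).continuous.locallyIntegrable hf x).fderiv]
  unfold convolution
  congr 1

/-- Smoothing a compactly supported continuous function, in `L²`. -/
lemma smooth_fun {f : E d → ℝ} (hf : Continuous f) (hfs : HasCompactSupport f) {ε : ℝ}
    (hε : 0 < ε) : ∃ g : E d → ℝ, ContDiff ℝ ∞ g ∧ HasCompactSupport g ∧ Near ε f g := by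
  obtain ⟨δ, hδ, h⟩ := mollify hf hfs hε
  obtain ⟨φ, hφ⟩ := exists_bump (d := d) hδ
  have hli := hf.locallyIntegrable (μ := (volume : Measure (E d)))
  have hs := φ.hasCompactSupport_normed (μ := (volume : Measure (E d)))
  have hg : ContDiff ℝ ∞
      (convolution (φ.normed volume) f (ContinuousLinearMap.lsmul ℝ ℝ) volume) :=
    hs.contDiff_convolution_left _ φ.contDiff_normed hli
  exact ⟨_, hg, hs.convolution _ hfs, h φ hφ _ hg.continuous fun x => rfl⟩

/-- Cutoffs at scale `n`, equal to one on the ball of radius `n`, with gradient `O(1 / n)`. -/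
lemma exists_cutoff (d : ℕ) : ∃ C : ℝ, ∀ n : ℝ, 1 ≤ n → ∃ χ : E d → ℝ, ContDiff ℝ 1 χ ∧
    HasCompactSupport χ ∧ (∀ x, 0 ≤ χ x ∧ χ x ≤ 1) ∧ (∀ x, ‖x‖ ≤ n → χ x = 1) ∧
    ∀ x, ‖fderiv ℝ χ x‖ ≤ C / n := by
  set φ : ContDiffBump (0 : E d) := ⟨1, 2, one_pos, one_lt_two⟩ with hφ
  have hφc : ContDiff ℝ 1 φ := φ.contDiff
  obtain ⟨C, hC⟩ := (hφc.continuous_fderiv one_ne_zero).bounded_above_of_compact_support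
    (φ.hasCompactSupport.fderiv ℝ)
  refine ⟨C, fun n hn => ⟨fun x => φ (n⁻¹ • x), ?_, ?_, ?_, ?_, ?_⟩⟩
  · exact hφc.comp (contDiff_const_smul _)
  · exact φ.hasCompactSupport.comp_homeomorph (Homeomorph.smulOfNeZero n⁻¹ (by positivity))
  · exact fun x => ⟨φ.nonneg, φ.le_one⟩
  · intro x hx
    refine φ.one_of_mem_closedBall ?_
    rw [mem_closedBall, dist_zero_right, norm_smul, norm_inv, Real.norm_of_nonneg (by linarith)]
    simp only [hφ]
    rw [inv_mul_le_iff₀ (by linarith)]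
    simpa using hx
  · intro x
    have h := ((hφc.differentiable one_ne_zero) (n⁻¹ • x)).hasFDerivAt.comp x
      ((hasFDerivAt_id x).const_smul n⁻¹)
    have h' : fderiv ℝ (fun x => φ (n⁻¹ • x)) x = _ := h.fderiv
    rw [h']
    have : (fderiv ℝ φ (n⁻¹ • x)).comp (n⁻¹ • ContinuousLinearMap.id ℝ (E d)) =
        n⁻¹ • fderiv ℝ φ (n⁻¹ • x) := by ext; simp
    rw [this, norm_smul, norm_inv, Real.norm_of_nonneg (by linarith), div_eq_inv_mul]
    exact mul_le_mul_of_nonneg_left (hC _) (by positivity)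

/-- Truncation in the Dirichlet norm of a function in `H¹`. -/
lemma truncate_grad {f : E d → ℝ} (hf : ContDiff ℝ 1 f) (hi : Integrable fun x => ‖f x‖ ^ 2)
    (hi' : Integrable fun x => ‖fderiv ℝ f x‖ ^ 2) {ε : ℝ} (hε : 0 < ε) :
    ∃ g : E d → ℝ, ContDiff ℝ 1 g ∧ HasCompactSupport g ∧ Near ε (fderiv ℝ f) (fderiv ℝ g) := by
  obtain ⟨C, hC⟩ := exists_cutoff d
  have h1 : ∀ᶠ n : ℝ in atTop,
      ∫ x in (closedBall (0 : E d) n)ᶜ, ‖fderiv ℝ f x‖ ^ 2 < ε / 4 :=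
    (tendsto_integral_compl hi').eventually (gt_mem_nhds (by positivity))
  have h2 : ∀ᶠ n : ℝ in atTop, (C / n) ^ 2 * ∫ x, ‖f x‖ ^ 2 < ε / 4 := by
    have ht : Tendsto (fun n : ℝ => (C / n) ^ 2 * ∫ x, ‖f x‖ ^ 2) atTop (𝓝 (0 ^ 2 * ∫ x, ‖f x‖ ^ 2)) :=
      ((tendsto_const_nhds.div_atTop tendsto_id).pow 2).mul_const _
    refine ht.eventually (gt_mem_nhds ?_)
    simpa using by positivity
  obtain ⟨n, hn1, hn2, hn⟩ := (h1.and (h2.and (eventually_ge_atTop 1))).exists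
  obtain ⟨χ, hχ, hχs, hχb, hχ1, hχd⟩ := hC n hn
  have hg : ContDiff ℝ 1 fun x => χ x * f x := hχ.mul hf
  have hfd := hf.differentiable one_ne_zero
  have hχdf := hχ.differentiable one_ne_zero
  have hcf : Continuous (fderiv ℝ f) := hf.continuous_fderiv one_ne_zero
  have hcg : Continuous (fderiv ℝ fun x => χ x * f x) := hg.continuous_fderiv one_ne_zero
  have hb : ∀ x, ‖fderiv ℝ f x - fderiv ℝ (fun x => χ x * f x) x‖ ^ 2 ≤
      2 * (closedBall (0 : E d) n)ᶜ.indicator (fun x => ‖fderiv ℝ f x‖ ^ 2) x +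
      2 * ((C / n) ^ 2 * ‖f x‖ ^ 2) := fun x => by
    rw [fderiv_fun_mul (hχdf x) (hfd x)]
    have e1 : fderiv ℝ f x - (χ x • fderiv ℝ f x + f x • fderiv ℝ χ x) =
        (1 - χ x) • fderiv ℝ f x - f x • fderiv ℝ χ x := by module
    rw [e1]
    have t1 := norm_sub_le ((1 - χ x) • fderiv ℝ f x) (f x • fderiv ℝ χ x)
    rw [norm_smul, norm_smul] at t1
    have t2 : (‖1 - χ x‖ * ‖fderiv ℝ f x‖) ^ 2 ≤
        (closedBall (0 : E d) n)ᶜ.indicator (fun x => ‖fderiv ℝ f x‖ ^ 2) x := by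
      by_cases hx : x ∈ closedBall (0 : E d) n
      · have : χ x = 1 := hχ1 x (by simpa using hx)
        simp [this, hx]
      · rw [Set.indicator_of_mem (Set.mem_compl hx)]
        have : ‖1 - χ x‖ ≤ 1 := by
          rw [Real.norm_eq_abs, abs_le]
          constructor <;> linarith [(hχb x).1, (hχb x).2]
        refine pow_le_pow_left₀ (by positivity) ?_ 2
        exact mul_le_of_le_one_left (norm_nonneg _) this
    have t3 : (‖f x‖ * ‖fderiv ℝ χ x‖) ^ 2 ≤ (C / n) ^ 2 * ‖f x‖ ^ 2 := by
      rw [mul_pow, mul_comm]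
      gcongr
      exact hχd x
    nlinarith [norm_nonneg ((1 - χ x) • fderiv ℝ f x - f x • fderiv ℝ χ x),
      sq_nonneg (‖1 - χ x‖ * ‖fderiv ℝ f x‖ - ‖f x‖ * ‖fderiv ℝ χ x‖)]
  have hI1 : Integrable ((closedBall (0 : E d) n)ᶜ.indicator fun x => ‖fderiv ℝ f x‖ ^ 2) :=
    (integrable_indicator_iff measurableSet_closedBall.compl).2 hi'.integrableOn
  have hI := (hI1.const_mul 2).add ((hi.const_mul ((C / n) ^ 2)).const_mul 2)
  have hint : Integrable fun x => ‖fderiv ℝ f x - fderiv ℝ (fun x => χ x * f x) x‖ ^ 2 :=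
    hI.mono' ((hcf.sub hcg).norm.pow 2).aestronglyMeasurable
      (Eventually.of_forall fun x => by rw [Real.norm_of_nonneg (by positivity)]; exact hb x)
  refine ⟨_, hg, hχs.mul_right, hcf, hcg, hint, (integral_mono hint hI hb).trans ?_⟩
  have : ∫ x, ((fun x => 2 * (closedBall (0 : E d) n)ᶜ.indicator
      (fun x => ‖fderiv ℝ f x‖ ^ 2) x) + fun x => 2 * ((C / n) ^ 2 * ‖f x‖ ^ 2) : E d → ℝ) x =
      2 * (∫ x in (closedBall (0 : E d) n)ᶜ, ‖fderiv ℝ f x‖ ^ 2) +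
      2 * ((C / n) ^ 2 * ∫ x, ‖f x‖ ^ 2) := by
    rw [← integral_indicator measurableSet_closedBall.compl, ← integral_const_mul,
      ← integral_const_mul, ← integral_const_mul]
    exact integral_add (hI1.const_mul 2) ((hi.const_mul ((C / n) ^ 2)).const_mul 2)
  rw [this]
  linarith

/-- Truncation in `L²`. -/
lemma truncate_fun {f : E d → ℝ} (hf : Continuous f) (hi : Integrable fun x => ‖f x‖ ^ 2)
    {ε : ℝ} (hε : 0 < ε) : ∃ g : E d → ℝ, Continuous g ∧ HasCompactSupport g ∧ Near ε f g := by
  obtain ⟨C, hC⟩ := exists_cutoff d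
  have h1 : ∀ᶠ n : ℝ in atTop, ∫ x in (closedBall (0 : E d) n)ᶜ, ‖f x‖ ^ 2 < ε :=
    (tendsto_integral_compl hi).eventually (gt_mem_nhds hε)
  obtain ⟨n, hn1, hn⟩ := (h1.and (eventually_ge_atTop 1)).exists
  obtain ⟨χ, hχ, hχs, hχb, hχ1, hχd⟩ := hC n hn
  have hg : Continuous fun x => χ x * f x := hχ.continuous.mul hf
  have hI : Integrable ((closedBall (0 : E d) n)ᶜ.indicator fun x => ‖f x‖ ^ 2) :=
    (integrable_indicator_iff measurableSet_closedBall.compl).2 hi.integrableOn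
  have hb : ∀ x, ‖f x - χ x * f x‖ ^ 2 ≤
      (closedBall (0 : E d) n)ᶜ.indicator (fun x => ‖f x‖ ^ 2) x := fun x => by
    by_cases hx : x ∈ closedBall (0 : E d) n
    · have : χ x = 1 := hχ1 x (by simpa using hx)
      simp [this, hx]
    · rw [Set.indicator_of_mem (Set.mem_compl hx)]
      have : ‖1 - χ x‖ ≤ 1 := by
        rw [Real.norm_eq_abs, abs_le]
        constructor <;> linarith [(hχb x).1, (hχb x).2]
      have e1 : f x - χ x * f x = (1 - χ x) * f x := by ring
      rw [e1, norm_mul]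
      refine pow_le_pow_left₀ (by positivity) ?_ 2
      exact mul_le_of_le_one_left (norm_nonneg _) this
  have hint : Integrable fun x => ‖f x - χ x * f x‖ ^ 2 :=
    hI.mono' ((hf.sub hg).norm.pow 2).aestronglyMeasurable
      (Eventually.of_forall fun x => by rw [Real.norm_of_nonneg (by positivity)]; exact hb x)
  refine ⟨_, hg, hχs.mul_right, hf, hg, hint, (integral_mono hint hI hb).trans ?_⟩
  rw [integral_indicator measurableSet_closedBall.compl]
  exact hn1.le

/-! ### Density in the Dirichlet norm -/

/-- The square of a sum with pairwise vanishing products is the sum of the squares. -/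
lemma sum_sq_of_disjoint {N : ℕ} {a : ℕ → ℝ} (h : ∀ k l, k ≠ l → a k * a l = 0) :
    (∑ k ∈ Finset.range N, a k) ^ 2 = ∑ k ∈ Finset.range N, a k ^ 2 := by
  rw [sq, Finset.sum_mul_sum]
  refine Finset.sum_congr rfl fun k hk => ?_
  rw [Finset.sum_eq_single k (fun l _ hl => h k l hl.symm) (fun hk' => absurd hk hk'), sq]

/-- Averages of far apart translates of an `L²` function are small in `L²`: up to a small error the
translates are orthogonal, so the average of `N` of them has squared norm `O(1 / N)`. -/
lemma avg_small (hd : 0 < d) {h : E d → ℝ} (hc : Continuous h)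
    (hi : Integrable fun x => h x ^ 2) {ε : ℝ} (hε : 0 < ε) :
    ∃ (N : ℕ) (y : ℕ → E d), 0 < N ∧
      Integrable (fun x => ((1 / N : ℝ) * ∑ k ∈ Finset.range N, h (x - y k)) ^ 2) ∧
      ∫ x, ((1 / N : ℝ) * ∑ k ∈ Finset.range N, h (x - y k)) ^ 2 ≤ ε := by
  set I := ∫ x, h x ^ 2 with hI
  have h1 : ∀ᶠ n : ℝ in atTop, ∫ x in (closedBall (0 : E d) n)ᶜ, h x ^ 2 < ε / 4 :=
    (tendsto_integral_compl hi).eventually (gt_mem_nhds (by positivity))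
  obtain ⟨n, hn, hn0⟩ := (h1.and (eventually_ge_atTop 0)).exists
  have h2 : ∀ᶠ N : ℕ in atTop, 2 / (N : ℝ) * I < ε / 2 := by
    have ht : Tendsto (fun N : ℕ => 2 / (N : ℝ) * I) atTop (𝓝 (0 * I)) :=
      (tendsto_const_nhds.div_atTop tendsto_natCast_atTop_atTop).mul_const _
    exact ht.eventually (gt_mem_nhds (by simpa using by positivity))
  obtain ⟨N, hN, hN0⟩ := (h2.and (eventually_gt_atTop 0)).exists
  have hNR : (0 : ℝ) < N := by exact_mod_cast hN0
  set u : E d := EuclideanSpace.single ⟨0, hd⟩ 1 with hu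
  have hu1 : ‖u‖ = 1 := by simp [hu]
  -- the spacing `2n + 1` makes the translates of the ball of radius `n` disjoint
  set y : ℕ → E d := fun k => ((2 * n + 1) * k : ℝ) • u with hy
  have hyd : ∀ k l : ℕ, k ≠ l → 2 * n + 1 ≤ ‖y k - y l‖ := fun k l hkl => by
    have e1 : y k - y l = ((2 * n + 1) * ((k : ℝ) - l)) • u := by
      simp only [hy]; module
    rw [e1, norm_smul, hu1, mul_one, norm_mul, Real.norm_of_nonneg (by linarith)]
    have : (1 : ℝ) ≤ ‖(k : ℝ) - l‖ := by
      have h3 : (1 : ℤ) ≤ |(k : ℤ) - l| := by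
        rw [← Int.zero_add 1]
        exact Int.add_one_le_iff.2 (abs_pos.2 (sub_ne_zero.2 (by exact_mod_cast hkl)))
      rw [Real.norm_eq_abs]
      exact_mod_cast h3
    nlinarith
  -- `a` is the main part of `h`, whose translates are disjoint, and `b` is the small tail
  set B := closedBall (0 : E d) n with hB
  set a : E d → ℝ := B.indicator h with ha
  set b : E d → ℝ := Bᶜ.indicator h with hb
  have hab : ∀ x, h x = a x + b x := fun x => (Set.indicator_self_add_compl_apply B h x).symm
  have hz : ∀ x k l, k ≠ l → a (x - y k) * a (x - y l) = 0 := fun x k l hkl => by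
    by_contra hne
    have hk : x - y k ∈ B := Set.mem_of_indicator_ne_zero (left_ne_zero_of_mul hne)
    have hl : x - y l ∈ B := Set.mem_of_indicator_ne_zero (right_ne_zero_of_mul hne)
    rw [hB, mem_closedBall, dist_zero_right] at hk hl
    have h3 := norm_sub_le (x - y l) (x - y k)
    rw [show x - y l - (x - y k) = y k - y l by abel] at h3
    linarith [hyd k l hkl]
  have ha2 : ∀ x, a x ^ 2 = B.indicator (fun x => h x ^ 2) x := fun x => by
    by_cases hx : x ∈ B <;> simp [ha, hx]
  have hb2 : ∀ x, b x ^ 2 = Bᶜ.indicator (fun x => h x ^ 2) x := fun x => by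
    by_cases hx : x ∈ B <;> simp [hb, hx]
  have hai : Integrable fun x => a x ^ 2 := by
    simp_rw [ha2]
    exact (integrable_indicator_iff measurableSet_closedBall).2 hi.integrableOn
  have hbi : Integrable fun x => b x ^ 2 := by
    simp_rw [hb2]
    exact (integrable_indicator_iff measurableSet_closedBall.compl).2 hi.integrableOn
  have hale : ∫ x, a x ^ 2 ≤ I := by
    refine integral_mono hai hi fun x => ?_
    simp only [ha2]
    exact Set.indicator_le_self' (fun x _ => sq_nonneg (h x)) x
  have hble : ∫ x, b x ^ 2 ≤ ε / 4 := by
    simp_rw [hb2]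
    rw [integral_indicator measurableSet_closedBall.compl]
    exact hn.le
  have hpt : ∀ x, ((1 / N : ℝ) * ∑ k ∈ Finset.range N, h (x - y k)) ^ 2 ≤
      ∑ k ∈ Finset.range N, (2 / (N : ℝ) ^ 2 * a (x - y k) ^ 2 + 2 / N * b (x - y k) ^ 2) :=
    fun x => by
    have e1 := sum_sq_of_disjoint (N := N) (a := fun k => a (x - y k)) (hz x)
    have e2 : (∑ k ∈ Finset.range N, b (x - y k)) ^ 2 ≤
        N * ∑ k ∈ Finset.range N, b (x - y k) ^ 2 := by
      simpa using sq_sum_le_card_mul_sum_sq (s := Finset.range N) (f := fun k => b (x - y k))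
    simp_rw [hab (x - y _)]
    rw [Finset.sum_add_distrib, Finset.sum_add_distrib, ← Finset.mul_sum, ← Finset.mul_sum, ← e1]
    set S := ∑ k ∈ Finset.range N, a (x - y k)
    set T := ∑ k ∈ Finset.range N, b (x - y k)
    set Q := ∑ k ∈ Finset.range N, b (x - y k) ^ 2
    have e3 : (1 / (N : ℝ) * (S + T)) ^ 2 ≤ 2 / (N : ℝ) ^ 2 * S ^ 2 + 2 / (N : ℝ) ^ 2 * T ^ 2 := by
      rw [mul_pow, div_pow, one_pow]
      have : 2 / (N : ℝ) ^ 2 * S ^ 2 + 2 / (N : ℝ) ^ 2 * T ^ 2 =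
        1 / (N : ℝ) ^ 2 * (2 * S ^ 2 + 2 * T ^ 2) := by ring
      rw [this]
      refine mul_le_mul_of_nonneg_left ?_ (by positivity)
      nlinarith [sq_nonneg (S - T)]
    have e4 : 2 / (N : ℝ) ^ 2 * T ^ 2 ≤ 2 / N * Q := by
      calc 2 / (N : ℝ) ^ 2 * T ^ 2 ≤ 2 / (N : ℝ) ^ 2 * (N * Q) :=
            mul_le_mul_of_nonneg_left e2 (by positivity)
        _ = 2 / N * Q := by field_simp
    linarith
  have hint1 : ∀ k ∈ Finset.range N, Integrable fun x =>
      (2 / (N : ℝ) ^ 2 * a (x - y k) ^ 2 + 2 / N * b (x - y k) ^ 2) := fun k _ =>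
    ((hai.comp_sub_right (y k)).const_mul _).add ((hbi.comp_sub_right (y k)).const_mul _)
  have hint2 := integrable_finsetSum _ hint1
  have hint : Integrable fun x => ((1 / N : ℝ) * ∑ k ∈ Finset.range N, h (x - y k)) ^ 2 :=
    hint2.mono' (by fun_prop)
      (Eventually.of_forall fun x => by rw [Real.norm_of_nonneg (by positivity)]; exact hpt x)
  refine ⟨N, y, hN0, hint, (integral_mono hint hint2 hpt).trans ?_⟩
  rw [integral_finsetSum _ hint1]
  have hk : ∀ k ∈ Finset.range N,
      ∫ x, (2 / (N : ℝ) ^ 2 * a (x - y k) ^ 2 + 2 / N * b (x - y k) ^ 2) =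
      2 / (N : ℝ) ^ 2 * (∫ x, a x ^ 2) + 2 / N * ∫ x, b x ^ 2 := fun k _ => by
    rw [integral_add ((hai.comp_sub_right (y k)).const_mul _)
      ((hbi.comp_sub_right (y k)).const_mul _), integral_const_mul, integral_const_mul,
      integral_sub_right_eq_self (fun x => a x ^ 2), integral_sub_right_eq_self (fun x => b x ^ 2)]
  rw [Finset.sum_congr rfl hk, Finset.sum_const, Finset.card_range, nsmul_eq_mul]
  have e5 : (N : ℝ) * (2 / (N : ℝ) ^ 2 * (∫ x, a x ^ 2) + 2 / N * ∫ x, b x ^ 2) =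
      2 / N * (∫ x, a x ^ 2) + 2 * ∫ x, b x ^ 2 := by field_simp
  rw [e5]
  have : 2 / (N : ℝ) * (∫ x, a x ^ 2) ≤ 2 / N * I := mul_le_mul_of_nonneg_left hale (by positivity)
  linarith

/-- The Cauchy-Schwarz inequality on the unit interval. -/
lemma sq_integral_le {u : ℝ → ℝ} (hu : Continuous u) :
    (∫ s in (0 : ℝ)..1, u s) ^ 2 ≤ ∫ s in (0 : ℝ)..1, u s ^ 2 := by
  set m := ∫ s in (0 : ℝ)..1, u s with hm
  have h0 : 0 ≤ ∫ s in (0 : ℝ)..1, (u s - m) ^ 2 :=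
    intervalIntegral.integral_nonneg zero_le_one fun s _ => sq_nonneg _
  have h1 : ∫ s in (0 : ℝ)..1, (u s - m) ^ 2 = (∫ s in (0 : ℝ)..1, u s ^ 2) - 2 * m * m + m ^ 2 := by
    have e1 : ∀ s, (u s - m) ^ 2 = u s ^ 2 - 2 * m * u s + m ^ 2 := fun s => by ring
    simp_rw [e1]
    rw [intervalIntegral.integral_add, intervalIntegral.integral_sub,
      intervalIntegral.integral_const_mul, ← hm]
    · simp
    all_goals exact Continuous.intervalIntegrable (by fun_prop) _ _
  nlinarith

/-- A function with square-integrable gradient has square-integrable increments. -/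
lemma increment_integrable {f : E d → ℝ} (hf : ContDiff ℝ 1 f)
    (hi : Integrable fun x => ‖fderiv ℝ f x‖ ^ 2) (y : E d) :
    Integrable fun x => (f x - f (x - y)) ^ 2 := by
  have hc : Continuous (fderiv ℝ f) := hf.continuous_fderiv one_ne_zero
  have hfd := hf.differentiable one_ne_zero
  set F : E d × ℝ → ℝ := fun p => ‖fderiv ℝ f (p.1 - p.2 • y)‖ ^ 2 with hF
  have hFc : Continuous F := by fun_prop
  have hFi : Integrable F (volume.prod (volume.restrict (Set.Ioc (0 : ℝ) 1))) := by
    rw [integrable_prod_iff' hFc.aestronglyMeasurable]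
    refine ⟨Eventually.of_forall fun s => hi.comp_sub_right (s • y), ?_⟩
    have : ∀ s : ℝ, ∫ x, ‖F (x, s)‖ = ∫ x, ‖fderiv ℝ f x‖ ^ 2 := fun s => by
      rw [← integral_sub_right_eq_self (fun x => ‖fderiv ℝ f x‖ ^ 2) (s • y)]
      refine integral_congr_ae (Eventually.of_forall fun x => ?_)
      simp only [hF]
      exact Real.norm_of_nonneg (by positivity)
    simp_rw [this]
    exact integrable_const _
  refine (hFi.integral_prod_left.const_mul (‖y‖ ^ 2)).mono'
    (by have := hf.continuous; fun_prop) (Eventually.of_forall fun x => ?_)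
  rw [Real.norm_of_nonneg (by positivity)]
  have hder : ∀ s : ℝ, HasDerivAt (fun s : ℝ => f (x - s • y))
      (fderiv ℝ f (x - s • y) (-y)) s := fun s => by
    have h1 : HasDerivAt (fun s : ℝ => x - s • y) (-y) s := by
      simpa using ((hasDerivAt_id s).smul_const y).const_sub x
    exact (hfd _).hasFDerivAt.comp_hasDerivAt s h1
  have hcd : Continuous fun s : ℝ => fderiv ℝ f (x - s • y) (-y) := by fun_prop
  have hftc := intervalIntegral.integral_eq_sub_of_hasDerivAt (a := 0) (b := 1)
    (fun s _ => hder s) (hcd.intervalIntegrable _ _)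
  simp only [one_smul, zero_smul, sub_zero] at hftc
  have e1 : (f x - f (x - y)) ^ 2 = (f (x - y) - f x) ^ 2 := by ring
  rw [e1, ← hftc]
  refine (sq_integral_le hcd).trans ?_
  rw [← integral_const_mul, ← intervalIntegral.integral_of_le zero_le_one]
  refine intervalIntegral.integral_mono_on zero_le_one
    (Continuous.intervalIntegrable (by fun_prop) _ _)
    (Continuous.intervalIntegrable (by fun_prop) _ _) fun s _ => ?_
  have h1 := (fderiv ℝ f (x - s • y)).le_opNorm (-y)
  rw [norm_neg] at h1
  calc (fderiv ℝ f (x - s • y) (-y)) ^ 2 = ‖fderiv ℝ f (x - s • y) (-y)‖ ^ 2 := by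
        rw [Real.norm_eq_abs, sq_abs]
    _ ≤ (‖fderiv ℝ f (x - s • y)‖ * ‖y‖) ^ 2 := pow_le_pow_left₀ (norm_nonneg _) h1 2
    _ = ‖y‖ ^ 2 * F (x, s) := by simp only [hF]; ring

/-- A function with square-integrable gradient is close, in the Dirichlet norm, to a function in
`H¹`: subtract the average of many far apart translates. No Sobolev inequality is needed, since
`f` minus a translate of `f` is already square-integrable. -/
lemma localize_grad (hd : 0 < d) {f : E d → ℝ} (hf : ContDiff ℝ 1 f)
    (hi : Integrable fun x => ‖fderiv ℝ f x‖ ^ 2) {ε : ℝ} (hε : 0 < ε) :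
    ∃ g : E d → ℝ, ContDiff ℝ 1 g ∧ Integrable (fun x => ‖g x‖ ^ 2) ∧
      Near ε (fderiv ℝ f) (fderiv ℝ g) := by
  have hc : Continuous (fderiv ℝ f) := hf.continuous_fderiv one_ne_zero
  have hfd := hf.differentiable one_ne_zero
  obtain ⟨N, y, hN, hint, hle⟩ := avg_small hd hc.norm hi hε
  have hNR : (0 : ℝ) < N := by exact_mod_cast hN
  set g : E d → ℝ := fun x => f x - (1 / N : ℝ) * ∑ k ∈ Finset.range N, f (x - y k) with hg
  have hgc : ContDiff ℝ 1 g :=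
    hf.sub (contDiff_const.mul (ContDiff.sum fun k _ => hf.comp (contDiff_id.sub contDiff_const)))
  have hgd : ∀ x, fderiv ℝ f x - fderiv ℝ g x =
      (1 / N : ℝ) • ∑ k ∈ Finset.range N, fderiv ℝ f (x - y k) := fun x => by
    have h1 : ∀ k ∈ Finset.range N, HasFDerivAt (fun x => f (x - y k)) (fderiv ℝ f (x - y k)) x :=
      fun k _ => by
      have h := (hfd (x - y k)).hasFDerivAt.comp x ((hasFDerivAt_id x).sub_const (y k))
      rwa [ContinuousLinearMap.comp_id] at h
    have h2 := (hfd x).hasFDerivAt.sub ((HasFDerivAt.fun_sum h1).const_mul (1 / N : ℝ))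
    have h3 : fderiv ℝ g x = _ := h2.fderiv
    rw [h3]
    abel
  have hpt : ∀ x, ‖fderiv ℝ f x - fderiv ℝ g x‖ ^ 2 ≤
      ((1 / N : ℝ) * ∑ k ∈ Finset.range N, ‖fderiv ℝ f (x - y k)‖) ^ 2 := fun x => by
    rw [hgd, norm_smul, Real.norm_of_nonneg (by positivity)]
    exact pow_le_pow_left₀ (by positivity)
      (mul_le_mul_of_nonneg_left (norm_sum_le _ _) (by positivity)) 2
  have hgc' : Continuous (fderiv ℝ g) := hgc.continuous_fderiv one_ne_zero
  have hint' : Integrable fun x => ‖fderiv ℝ f x - fderiv ℝ g x‖ ^ 2 :=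
    hint.mono' ((hc.sub hgc').norm.pow 2).aestronglyMeasurable
      (Eventually.of_forall fun x => by rw [Real.norm_of_nonneg (by positivity)]; exact hpt x)
  refine ⟨g, hgc, ?_, hc, hgc', hint', (integral_mono hint' hint hpt).trans hle⟩
  have hsum : Integrable fun x => (1 / N : ℝ) * ∑ k ∈ Finset.range N, (f x - f (x - y k)) ^ 2 :=
    (integrable_finsetSum _ fun k _ => increment_integrable hf hi (y k)).const_mul _
  refine hsum.mono' (hgc.continuous.norm.pow 2).aestronglyMeasurable
    (Eventually.of_forall fun x => ?_)
  rw [Real.norm_of_nonneg (by positivity), Real.norm_eq_abs, sq_abs]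
  have e1 : g x = (1 / N : ℝ) * ∑ k ∈ Finset.range N, (f x - f (x - y k)) := by
    simp only [hg]
    rw [Finset.sum_sub_distrib, Finset.sum_const, Finset.card_range, nsmul_eq_mul]
    field_simp
  have e2 : (∑ k ∈ Finset.range N, (f x - f (x - y k))) ^ 2 ≤
      N * ∑ k ∈ Finset.range N, (f x - f (x - y k)) ^ 2 := by
    simpa using sq_sum_le_card_mul_sum_sq (s := Finset.range N) (f := fun k => f x - f (x - y k))
  rw [e1, mul_pow]
  calc (1 / (N : ℝ)) ^ 2 * (∑ k ∈ Finset.range N, (f x - f (x - y k))) ^ 2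
      ≤ (1 / (N : ℝ)) ^ 2 * (N * ∑ k ∈ Finset.range N, (f x - f (x - y k)) ^ 2) :=
        mul_le_mul_of_nonneg_left e2 (by positivity)
    _ = 1 / (N : ℝ) * ∑ k ∈ Finset.range N, (f x - f (x - y k)) ^ 2 := by field_simp

/-- Smooth compactly supported functions are dense in the Dirichlet norm. -/
lemma density_grad (hd : 0 < d) {f : E d → ℝ} (hf : ContDiff ℝ 1 f)
    (hi : Integrable fun x => ‖fderiv ℝ f x‖ ^ 2) {ε : ℝ} (hε : 0 < ε) :
    ∃ g : E d → ℝ, ContDiff ℝ ∞ g ∧ HasCompactSupport g ∧ Near ε (fderiv ℝ f) (fderiv ℝ g) := by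
  obtain ⟨f1, h1, h1i, hn1⟩ := localize_grad hd hf hi (ε := ε / 10) (by positivity)
  obtain ⟨f2, h2, h2s, hn2⟩ := truncate_grad h1 h1i (hn1.sq_integrable hi) (ε := ε / 10)
    (by positivity)
  obtain ⟨g, hg, hgs, hn3⟩ := smooth_grad h2 h2s (ε := ε / 10) (by positivity)
  exact ⟨g, hg, hgs, hn1.trans (hn2.trans hn3 le_rfl) (by linarith)⟩

/-- Smooth compactly supported functions are dense in `L²`. -/
lemma density_fun {f : E d → ℝ} (hf : Continuous f)
    (hi : Integrable fun x => ‖f x‖ ^ 2) {ε : ℝ} (hε : 0 < ε) :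
    ∃ g : E d → ℝ, ContDiff ℝ ∞ g ∧ HasCompactSupport g ∧ Near ε f g := by
  obtain ⟨f2, h2, h2s, hn2⟩ := truncate_fun hf hi (ε := ε / 4) (by positivity)
  obtain ⟨g, hg, hgs, hn3⟩ := smooth_fun h2 h2s (ε := ε / 4) (by positivity)
  exact ⟨g, hg, hgs, hn2.trans hn3 (by linarith)⟩

/-! ### Decay of the energy of a general wave -/

lemma norm_sq_dual (φ : E d →L[ℝ] ℝ) : ‖φ‖ ^ 2 = ∑ i, φ (EuclideanSpace.single i 1) ^ 2 := by
  obtain ⟨g, rfl⟩ := (InnerProductSpace.toDual ℝ (E d)).surjective φ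
  rw [LinearIsometryEquiv.norm_map, EuclideanSpace.real_norm_sq_eq]
  refine Finset.sum_congr rfl fun i _ => ?_
  rw [InnerProductSpace.toDual_apply_apply, EuclideanSpace.inner_single_right]
  simp

/-- The energy density in terms of the gradient of a time slice. -/
lemma en_eq {U : E d × ℝ → ℝ} (hU : Differentiable ℝ U) (x : E d) (t : ℝ) :
    en U (x, t) = ‖fderiv ℝ (fun y => U (y, t)) x‖ ^ 2 + D τ U (x, t) ^ 2 := by
  rw [norm_sq_dual]
  simp only [en, fderiv_slice hU]

lemma en_le_two_mul {U W : E d × ℝ → ℝ} (hU : IsWave U) (hW : IsWave W) (q : E d × ℝ) :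
    en U q ≤ 2 * en (fun q => U q - W q) q + 2 * en W q := by
  have h : ∀ w, D w U q ^ 2 ≤ 2 * D w (fun q => U q - W q) q ^ 2 + 2 * D w W q ^ 2 := fun w => by
    rw [D_sub hU.differentiable hW.differentiable]
    nlinarith [sq_nonneg (D w U q - 2 * D w W q)]
  have h1 := Finset.sum_le_sum fun i (_ : i ∈ Finset.univ) => h (e i)
  rw [Finset.sum_add_distrib, ← Finset.mul_sum, ← Finset.mul_sum] at h1
  have h2 := h τ
  unfold en
  linarith

/-- A finite-energy wave is approximated in energy by waves supported in a light cone. -/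
lemma IsWave.approx (hd : 3 ≤ d) {U : E d × ℝ → ℝ} (hU : IsWave U)
    (hi : Integrable fun x => en U (x, 0)) {ε : ℝ} (hε : 0 < ε) :
    ∃ W : E d × ℝ → ℝ, IsWave W ∧ (∃ R : ℝ, 0 < R ∧ ∀ x t, R + |t| < ‖x‖ → W (x, t) = 0) ∧
      Integrable (fun x => en (fun q => U q - W q) (x, 0)) ∧
      ∫ x, en (fun q => U q - W q) (x, 0) ≤ ε := by
  have hUd := hU.differentiable
  set f : E d → ℝ := fun x => U (x, 0) with hf
  set g : E d → ℝ := fun x => D τ U (x, 0) with hg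
  have hfc : ContDiff ℝ 1 f :=
    (hU.smooth.of_le (by norm_num)).comp (contDiff_id.prodMk contDiff_const)
  have hgc : Continuous g :=
    (continuous_D (hU.smooth.of_le (by norm_num)) τ).comp (continuous_slice 0)
  have hfi : Integrable fun x => ‖fderiv ℝ f x‖ ^ 2 := by
    refine hi.mono' ((hfc.continuous_fderiv one_ne_zero).norm.pow 2).aestronglyMeasurable
      (Eventually.of_forall fun x => ?_)
    rw [Real.norm_of_nonneg (by positivity), en_eq hUd]
    linarith [sq_nonneg (D τ U (x, 0))]
  have hgi : Integrable fun x => ‖g x‖ ^ 2 := by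
    refine hi.mono' (hgc.norm.pow 2).aestronglyMeasurable (Eventually.of_forall fun x => ?_)
    rw [Real.norm_of_nonneg (by positivity), en_eq hUd, Real.norm_eq_abs, sq_abs]
    linarith [sq_nonneg ‖fderiv ℝ f x‖]
  obtain ⟨F, hF, hFs, -, -, hFi, hFe⟩ := density_grad (by lia) hfc hfi (ε := ε / 2) (by positivity)
  obtain ⟨G, hG, hGs, -, -, hGi, hGe⟩ := density_fun hgc hgi (ε := ε / 2) (by positivity)
  obtain ⟨W, hW, hWF, hWG⟩ := exists_wave hd hF hFs hG hGs
  have hWd := hW.differentiable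
  have hWf : (fun x => W (x, 0)) = F := funext hWF
  have hUW := hU.sub hW
  have hen : ∀ x, en (fun q => U q - W q) (x, 0) =
      ‖fderiv ℝ f x - fderiv ℝ F x‖ ^ 2 + ‖g x - G x‖ ^ 2 := fun x => by
    have h1 : fderiv ℝ (fun y => U (y, 0) - W (y, 0)) x = fderiv ℝ f x - fderiv ℝ F x := by
      rw [← hWf]
      exact fderiv_fun_sub (hasFDerivAt_slice hUd x 0).differentiableAt
        (hasFDerivAt_slice hWd x 0).differentiableAt
    rw [en_eq hUW.differentiable, h1, D_sub hUd hWd, hWG, Real.norm_eq_abs (g x - G x),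
      sq_abs]
  refine ⟨W, hW, ?_, ?_, ?_⟩
  · obtain ⟨ρ, hρ⟩ := (hFs.isCompact.union hGs.isCompact).isBounded.subset_closedBall (0 : E d)
    have hout : ∀ x : E d, ρ < ‖x‖ → x ∉ tsupport F ∧ x ∉ tsupport G := fun x hx => by
      have : x ∉ closedBall (0 : E d) ρ := by simpa using hx
      exact ⟨fun h => this (hρ (Or.inl h)), fun h => this (hρ (Or.inr h))⟩
    refine ⟨|ρ| + 2, by positivity, fun x t hx => ?_⟩
    refine hW.eq_zero_of_data (ρ := ρ) (fun x hx => ?_) x t (by linarith [le_abs_self ρ])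
    obtain ⟨h1, h2⟩ := hout x hx
    refine ⟨by rw [hWF, image_eq_zero_of_notMem_tsupport h1], ?_⟩
    rw [en_eq hWd, hWf, hWG, image_eq_zero_of_notMem_tsupport h2, fderiv_of_notMem_tsupport (𝕜 := ℝ) h1]
    simp
  · simp_rw [hen]
    exact hFi.add hGi
  · simp_rw [hen]
    rw [integral_add hFi hGi]
    linarith

/-- The energy deep inside the light cone tends to zero. -/
lemma IsWave.interior_decay (hd : 3 ≤ d) {U : E d × ℝ → ℝ} (hU : IsWave U)
    (hi : Integrable fun x => en U (x, 0)) {ε : ℝ} (hε : 0 < ε) :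
    ∃ η₀ : ℝ, ∀ η : ℝ, η₀ ≤ η → ∀ t : ℝ, η < t → ∫ x in ball 0 (t - η), en U (x, t) ≤ ε := by
  obtain ⟨W, hW, ⟨R, hR, hWs⟩, hUWi, hUWe⟩ := hU.approx hd hi (ε := ε / 4) (by positivity)
  obtain ⟨C, hC⟩ := hW.decay_of_support hd hR hWs
  refine ⟨max R (4 * C / ε), fun η hη t ht => ?_⟩
  have hηR : R ≤ η := (le_max_left _ _).trans hη
  have hη0 : 0 < η := hR.trans_le hηR
  have hηC : 4 * C / ε ≤ η := (le_max_right _ _).trans hη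
  have hUW := hU.sub hW
  have h1 : ∫ x in ball 0 (t - η), en (fun q => U q - W q) (x, t) ≤ ε / 4 :=
    (setIntegral_le_integral (hUW.integrable_en hUWi t)
      (Eventually.of_forall fun x => en_nonneg _ _)).trans ((hUW.energy_le hUWi t).trans hUWe)
  have h2 : ∫ x in ball 0 (t - η), en W (x, t) ≤ ε / 4 := by
    have h3 := hC η t hη0.le (hηR.trans ht.le)
    rw [div_le_iff₀ hε] at hηC
    have h4 : η * ∫ x in ball 0 (t - η), en W (x, t) ≤ η * (ε / 4) := by linarith
    exact le_of_mul_le_mul_left h4 hη0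
  have hon : ∀ {V : E d × ℝ → ℝ}, IsWave V →
      IntegrableOn (fun x => en V (x, t)) (ball 0 (t - η)) := fun hV =>
    ((hV.continuous_en t).continuousOn.integrableOn_compact
      (isCompact_closedBall (0 : E d) (t - η))).mono_set ball_subset_closedBall
  calc ∫ x in ball 0 (t - η), en U (x, t)
      ≤ ∫ x in ball 0 (t - η), (2 * en (fun q => U q - W q) (x, t) + 2 * en W (x, t)) :=
        integral_mono (hon hU) (((hon hUW).const_mul 2).add ((hon hW).const_mul 2))
          fun x => en_le_two_mul hU hW (x, t)
    _ = 2 * (∫ x in ball 0 (t - η), en (fun q => U q - W q) (x, t)) +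
          2 * ∫ x in ball 0 (t - η), en W (x, t) := by
        rw [integral_add ((hon hUW).const_mul 2) ((hon hW).const_mul 2), integral_const_mul,
          integral_const_mul]
    _ ≤ ε := by linarith

/-- The energy far outside the light cone tends to zero. -/
lemma IsWave.exterior_decay {U : E d × ℝ → ℝ} (hU : IsWave U)
    (hi : Integrable fun x => en U (x, 0)) {ε : ℝ} (hε : 0 < ε) :
    ∃ R₀ : ℝ, ∀ R : ℝ, R₀ ≤ R → ∀ t : ℝ, 0 < t → ∫ x in {x | t + R < ‖x‖}, en U (x, t) ≤ ε := by
  obtain ⟨ρ, hρ⟩ := eventually_atTop.1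
    ((tendsto_integral_compl hi).eventually (gt_mem_nhds hε))
  refine ⟨ρ + 2, fun R hR t ht => ?_⟩
  have h1 := hU.energy_compl_le hi (R - 2) t
  have hset : {x : E d | t + R < ‖x‖} = (closedBall 0 (R - 2 + 2 + |t|))ᶜ := by
    ext x
    simp [abs_of_pos ht, add_comm]
  rw [hset]
  exact h1.trans (hρ (R - 2) (by linarith)).le

/-! ### From `FreeWave` to `IsWave` -/

lemma isWave_freeWave (V : FreeWave d) : IsWave fun q : E d × ℝ => V.v q.1 q.2 where
  smooth := V.smooth
  pde := fun ⟨x, t⟩ => by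
    have hd := V.smooth.differentiable (by norm_num)
    have hdD : ∀ w, Differentiable ℝ (D w fun q : E d × ℝ => V.v q.1 q.2) := fun w =>
      (contDiff_D (m := 1) V.smooth (by norm_num) w).differentiable one_ne_zero
    have h1 : deriv (V.v x) = fun s => D τ (fun q : E d × ℝ => V.v q.1 q.2) (x, s) :=
      funext fun s => (hasDerivAt_slice_time hd x s).deriv
    have h2 := V.pde x t
    rw [h1, (hasDerivAt_slice_time (hdD τ) x t).deriv] at h2
    rw [h2, lap]
    refine Finset.sum_congr rfl fun i _ => ?_
    rw [← fderiv_slice (hdD (e i)) x t i]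
    congr 2
    exact funext fun y => fderiv_slice hd y t i

lemma en_freeWave (V : FreeWave d) (x : E d) (t : ℝ) :
    en (fun q : E d × ℝ => V.v q.1 q.2) (x, t) =
      ‖gradient (fun y => V.v y t) x‖ ^ 2 + deriv (V.v x) t ^ 2 := by
  have hd := (isWave_freeWave V).differentiable
  rw [en_eq hd, ← (hasDerivAt_slice_time hd x t).deriv, gradient, LinearIsometryEquiv.norm_map]

end FreeWaveDecay

/-- **Decay of free waves inside and far outside the cone (Proposition 5.2).**
For `d ≥ 3` and every finite-energy classical free wave `v`:
(i) `lim_{η→+∞} sup_{t>η} ∫_{|x|<t−η}(|∇v|² + |∂ₜv|²)dx = 0`;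
(ii) `lim_{R→+∞} sup_{t>0} ∫_{|x|>t+R}(|∇v|² + |∂ₜv|²)dx = 0`. -/
theorem free_wave_decay (d : ℕ) (hd : 3 ≤ d) (V : FreeWave d) :
    (∀ ε : ℝ, 0 < ε → ∃ η₀ : ℝ, ∀ η : ℝ, η₀ ≤ η → ∀ t : ℝ, η < t →
      (∫ x in Metric.ball (0 : EuclideanSpace ℝ (Fin d)) (t - η),
          (‖gradient (fun y => V.v y t) x‖ ^ 2 + (deriv (V.v x) t) ^ 2)) ≤ ε)
    ∧ (∀ ε : ℝ, 0 < ε → ∃ R₀ : ℝ, ∀ R : ℝ, R₀ ≤ R → ∀ t : ℝ, 0 < t →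
      (∫ x in {x : EuclideanSpace ℝ (Fin d) | t + R < ‖x‖},
          (‖gradient (fun y => V.v y t) x‖ ^ 2 + (deriv (V.v x) t) ^ 2)) ≤ ε) := by
  have hi := V.finite 0
  simp_rw [← FreeWaveDecay.en_freeWave] at hi ⊢
  exact ⟨fun ε hε => (FreeWaveDecay.isWave_freeWave V).interior_decay hd hi hε,
    fun ε hε => (FreeWaveDecay.isWave_freeWave V).exterior_decay hi hε⟩
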